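/- For every integer d ≥ 3 there exists a constant c_d > 0 such that for every integer k ≥ 2 there exists n₀ with the following property: every set P of n ≥ n₀ points in ℝ^d in general position contains pairwise disjoint subsets A₁, …, A_k, B₁, …, B_k, each of size at least n / k^{c_d}, such that for every choice of points a₁ ∈ A₁, …, a_k ∈ A_k and b₁ ∈ B₁, …, b_k ∈ B_k, the sets {a₁, …, a_k} and {b₁, …, b_k} are mutually avoiding. -/

import Mathlib

noncomputable section

/-- A set of points in `ℝ^d` is in general position if no `d+1` of its points lie on a
common hyperplane, i.e. every `d+1` of its points are affinely independent. -/
def GenPosD (d : ℕ) (P : Set (EuclideanSpace ℝ (Fin d))) : Prop :=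
  ∀ s : Finset (EuclideanSpace ℝ (Fin d)), ↑s ⊆ P → s.card = d + 1 →
    AffineIndependent ℝ (fun x : s => (x : EuclideanSpace ℝ (Fin d)))

/-- `A` avoids `B` if no hyperplane spanned by `d` points of `A` meets the convex hull
of `B`. -/
def AvoidsD (d : ℕ) (A B : Set (EuclideanSpace ℝ (Fin d))) : Prop :=
  ∀ s : Finset (EuclideanSpace ℝ (Fin d)), ↑s ⊆ A → s.card = d →
    Disjoint
      ((affineSpan ℝ (s : Set (EuclideanSpace ℝ (Fin d)))
        : AffineSubspace ℝ (EuclideanSpace ℝ (Fin d))) : Set (EuclideanSpace ℝ (Fin d)))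
      (convexHull ℝ B)

def MutuallyAvoidingD (d : ℕ) (A B : Set (EuclideanSpace ℝ (Fin d))) : Prop :=
  AvoidsD d A B ∧ AvoidsD d B A

/-!
Placing `ℝ^d` at height one in `ℝ^(d+1)` turns affine hyperplanes into linear ones, and general
position into linear independence of any `d + 1` vectors.

Call `d + 1` convex sets well separated if no linear hyperplane crosses all of them. Cutting with
centerpoint half-spaces, once for every sign pattern, shrinks `d + 1` point sets by a constant
factor to subsets of well-separated simplices. Iterating this `t` times gives a tree with
`(d + 1) ^ t` leaves of which a hyperplane crosses at most `d ^ t`, since at each inner node it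
misses one child. A hyperplane crossing `d + 1` leaves can be tilted until it is spanned by
vertices of `d` of them, so there are few candidates for it, and a random choice of `M` leaves is
such that any `d + 1` of them are well separated.

The same tree, applied to one representative from each of the `M` leaves, yields two families of
`k` representatives that are mutually avoiding: for most pairs of leaves, no hyperplane spanned by
`d` points of one crosses the other. Whether a hyperplane spanned by `d` representatives crosses
the convex hull of others is determined by the signs of determinants, and these do not change when
points move within well-separated convex sets. Hence the leaves of the chosen representatives
are the required blocks. With `t` a multiple of `log k`, all losses are polynomial in `k`.
-/

open Module Function
open scoped Finset

section Crossing

variable {E : Type*} [AddCommGroup E] [Module ℝ E]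

/-- A linear subspace, typically a hyperplane, crosses a set if it meets it. -/
def Crosses (H : Submodule ℝ E) (C : Set E) : Prop :=
  ((H : Set E) ∩ C).Nonempty

theorem Crosses.mono {H : Submodule ℝ E} {C D : Set E} (h : Crosses H C) (hCD : C ⊆ D) :
    Crosses H D :=
  Set.Nonempty.mono (Set.inter_subset_inter_right _ hCD) h

theorem Crosses.mono_left {H K : Submodule ℝ E} {C : Set E} (h : Crosses H C) (hHK : H ≤ K) :
    Crosses K C :=
  Set.Nonempty.mono (Set.inter_subset_inter_left _ hHK) h

theorem mul_pos_of_forall_ne_zero_of_convex {f : Dual ℝ E} {C : Set E} (hC : Convex ℝ C)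
    (hf : ∀ x ∈ C, f x ≠ 0) {x y : E} (hx : x ∈ C) (hy : y ∈ C) : 0 < f x * f y := by
  have hzero : (0 : ℝ) ∉ f '' C := by
    rintro ⟨z, hz, hfz⟩
    exact hf z hz hfz
  have hordConnected := (hC.linear_image f).ordConnected
  have hfx := Set.mem_image_of_mem f hx
  have hfy := Set.mem_image_of_mem f hy
  by_contra! h
  rcases mul_nonpos_iff.1 h with ⟨hx0, hy0⟩ | ⟨hx0, hy0⟩
  · exact hzero (hordConnected.out hfy hfx ⟨hy0, hx0⟩)
  · exact hzero (hordConnected.out hfx hfy ⟨hx0, hy0⟩)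

theorem crosses_ker_convexHull_iff {f : Dual ℝ E} {V : Set E} :
    Crosses (LinearMap.ker f) (convexHull ℝ V) ↔ (∃ v ∈ V, 0 ≤ f v) ∧ ∃ v ∈ V, f v ≤ 0 := by
  constructor
  · rintro ⟨x, hxf, hx⟩
    have hfx : f x = 0 := hxf
    constructor <;> by_contra! h
    · have : f x < 0 := convexHull_min h (convex_halfSpace_lt f.isLinear 0) hx
      exact this.ne hfx
    · have : 0 < f x := convexHull_min h (convex_halfSpace_gt f.isLinear 0) hx
      exact this.ne' hfx
  · rintro ⟨⟨v, hv, hfv⟩, w, hw, hfw⟩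
    by_contra h
    have hne : ∀ x ∈ convexHull ℝ V, f x ≠ 0 := fun x hx hfx => h ⟨x, hfx, hx⟩
    exact (mul_pos_of_forall_ne_zero_of_convex (convex_convexHull ℝ V) hne
      (subset_convexHull ℝ V hv) (subset_convexHull ℝ V hw)).not_ge
      (mul_nonpos_of_nonneg_of_nonpos hfv hfw)

end Crossing

section GeneralPosition

variable {E : Type*} [AddCommGroup E] [Module ℝ E]

/-- Linear (homogenised) general position: any `finrank ℝ E` of the vectors are linearly
independent, so that a linear hyperplane contains fewer than `finrank ℝ E` of them. -/
def LinearGeneralPosition (P : Finset E) : Prop :=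
  ∀ Z ⊆ P, #Z = finrank ℝ E → LinearIndepOn ℝ id (Z : Set E)

theorem LinearGeneralPosition.mono {P Q : Finset E} (hP : LinearGeneralPosition P) (hQ : Q ⊆ P) :
    LinearGeneralPosition Q :=
  fun Z hZ => hP Z (hZ.trans hQ)

open scoped Classical in
theorem LinearGeneralPosition.card_filter_mem_lt [FiniteDimensional ℝ E] {P : Finset E}
    (hP : LinearGeneralPosition P) {H : Submodule ℝ E} (hH : H ≠ ⊤) :
    #{x ∈ P | x ∈ H} < finrank ℝ E := by
  by_contra! hcard
  obtain ⟨Z, hZ, hZcard⟩ := Finset.exists_subset_card_eq hcard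
  have hindep := hP Z (hZ.trans (Finset.filter_subset _ _)) hZcard
  have hZH : Submodule.span ℝ (Z : Set E) ≤ H :=
    Submodule.span_le.2 fun z hz => (Finset.mem_filter.1 (hZ hz)).2
  have hspan : finrank ℝ (Submodule.span ℝ (Z : Set E)) = finrank ℝ E := by
    rw [finrank_span_finset_eq_card hindep, hZcard]
  exact hH (top_le_iff.1 (Submodule.eq_top_of_finrank_eq hspan ▸ hZH))

theorem exists_centerpoint [FiniteDimensional ℝ E] (X : Finset E) :
    ∃ c : E, ∀ f : Dual ℝ E, 0 ≤ f c → #X ≤ (finrank ℝ E + 1) * #{x ∈ X | 0 ≤ f x} := by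
  classical
  -- Helly's theorem for the convex hulls of the subsets missing few points of `X`
  let large : Finset (Finset E) := {S ∈ X.powerset | (finrank ℝ E + 1) * #(X \ S) < #X}
  have hinter : (⋂ S ∈ large, convexHull ℝ (S : Set E)).Nonempty := by
    refine Convex.helly_theorem' (fun S _ => convex_convexHull ℝ _) fun I hI hIcard => ?_
    rcases X.eq_empty_or_nonempty with rfl | hX
    · exact ⟨0, Set.mem_iInter₂.2 fun S hS => by simpa [large] using hI hS⟩
    have hXpos : 0 < #X := hX.card_pos
    have hmissed : (finrank ℝ E + 1) * #(I.biUnion (X \ ·)) < (finrank ℝ E + 1) * #X := calc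
      _ ≤ (finrank ℝ E + 1) * ∑ S ∈ I, #(X \ S) := Nat.mul_le_mul_left _ Finset.card_biUnion_le
      _ = ∑ S ∈ I, (finrank ℝ E + 1) * #(X \ S) := Finset.mul_sum ..
      _ ≤ #I * (#X - 1) :=
        Finset.sum_le_card_nsmul _ _ _ fun S hS =>
          Nat.le_sub_one_of_lt (Finset.mem_filter.1 (hI hS)).2
      _ ≤ (finrank ℝ E + 1) * (#X - 1) := Nat.mul_le_mul_right _ hIcard
      _ < (finrank ℝ E + 1) * #X := by gcongr; omega
    obtain ⟨x, hx, hxI⟩ := Finset.exists_mem_notMem_of_card_lt_card (lt_of_mul_lt_mul_left' hmissed)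
    refine ⟨x, Set.mem_iInter₂.2 fun S hS => subset_convexHull ℝ _ ?_⟩
    by_contra hxS
    exact hxI (Finset.mem_biUnion.2 ⟨S, hS, Finset.mem_sdiff.2 ⟨hx, hxS⟩⟩)
  obtain ⟨c, hc⟩ := hinter
  refine ⟨c, fun f hfc => ?_⟩
  by_contra! hfew
  have hlarge : X \ {x ∈ X | 0 ≤ f x} ∈ large := by
    refine Finset.mem_filter.2 ⟨Finset.mem_powerset.2 Finset.sdiff_subset, ?_⟩
    rwa [Finset.sdiff_sdiff_eq_self (Finset.filter_subset _ _)]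
  have hneg : f c < 0 := by
    refine convexHull_min (fun x hx => ?_) (convex_halfSpace_lt f.isLinear 0)
      (Set.mem_iInter₂.1 hc _ hlarge)
    obtain ⟨hxX, hxf⟩ := Finset.mem_sdiff.1 hx
    simpa using fun h => hxf (Finset.mem_filter.2 ⟨hxX, h⟩)
  exact hneg.not_ge hfc

theorem exists_dual_ne_zero_forall_nonneg [Nontrivial E] {ι : Type*} [Fintype ι] (v : ι → E)
    (hι : Fintype.card ι ≤ finrank ℝ E) : ∃ g : Dual ℝ E, g ≠ 0 ∧ ∀ i, 0 ≤ g (v i) := by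
  classical
  by_cases hspan : Submodule.span ℝ (Set.range v) = ⊤
  · let b := Basis.mk (linearIndependent_of_top_le_span_of_card_le_finrank hspan.ge hι) hspan.ge
    obtain ⟨i₀⟩ := b.index_nonempty
    refine ⟨b.coord i₀, fun h => ?_, fun i => ?_⟩
    · simpa using congr($h (b i₀))
    · have : b.coord i₀ (b i) = if i = i₀ then 1 else 0 := by simp [Finsupp.single_apply]
      rw [Basis.mk_apply] at this
      rw [this]
      split_ifs <;> norm_num
  · obtain ⟨g, hg, hle⟩ := Submodule.exists_le_ker_of_lt_top _ (lt_top_iff_ne_top.2 hspan)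
    exact ⟨g, hg, fun i => (hle (Submodule.subset_span ⟨i, rfl⟩)).ge⟩

theorem LinearGeneralPosition.exists_signed_halfSpace [FiniteDimensional ℝ E] [Nontrivial E]
    {ι : Type*} [Fintype ι] (hι : Fintype.card ι ≤ finrank ℝ E) {X : ι → Finset E}
    (hX : ∀ i, LinearGeneralPosition (X i)) (σ : ι → ℤˣ) {m : ℕ} (hm : 1 ≤ m)
    (hcard : ∀ i, (finrank ℝ E + 1) ^ 2 * m ≤ #(X i)) :
    ∃ g : Dual ℝ E, ∀ i, m ≤ #{x ∈ X i | 0 < σ i • g x} := by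
  classical
  choose c hc using fun i => exists_centerpoint (X i)
  obtain ⟨g, hg, hgc⟩ := exists_dual_ne_zero_forall_nonneg (fun i => σ i • c i) hι
  refine ⟨g, fun i => ?_⟩
  have hclosed : #(X i) ≤ (finrank ℝ E + 1) * #{x ∈ X i | 0 ≤ σ i • g x} :=
    hc i (σ i • g) (by simpa using hgc i)
  have hon : #{x ∈ X i | x ∈ LinearMap.ker g} < finrank ℝ E :=
    (hX i).card_filter_mem_lt (by simpa [LinearMap.ker_eq_top] using hg)
  have hsplit : #{x ∈ X i | 0 ≤ σ i • g x} ≤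
      #{x ∈ X i | 0 < σ i • g x} + #{x ∈ X i | x ∈ LinearMap.ker g} := by
    refine (Finset.card_le_card fun x hx => ?_).trans (Finset.card_union_le _ _)
    obtain ⟨hxX, hx0⟩ := Finset.mem_filter.1 hx
    simp only [Finset.mem_union, Finset.mem_filter, LinearMap.mem_ker, hxX, true_and]
    exact hx0.lt_or_eq.imp_right fun h => (smul_eq_zero_iff_eq (σ i)).1 h.symm
  have : (finrank ℝ E + 1) * m ≤ #{x ∈ X i | 0 ≤ σ i • g x} := by
    refine Nat.le_of_mul_le_mul_left ?_ (by positivity : 0 < finrank ℝ E + 1)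
    calc _ = (finrank ℝ E + 1) ^ 2 * m := by ring
      _ ≤ _ := (hcard i).trans hclosed
  nlinarith

end GeneralPosition

section HalfSpace

variable {E : Type*} [AddCommGroup E] [Module ℝ E]

/-- The point of the line through `v` and `w` on the level set `g = ε`. When `g v = g w` the
inverse makes it the junk value `0`. -/
def crossingPoint (g : Dual ℝ E) (ε : ℝ) (v w : E) : E :=
  (g v - g w)⁻¹ • ((ε - g w) • v + (g v - ε) • w)

variable {g : Dual ℝ E} {ε : ℝ} {v w : E}

theorem crossingPoint_neg : crossingPoint (-g) (-ε) w v = crossingPoint g ε v w := by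
  simp only [crossingPoint, LinearMap.neg_apply]
  module

theorem map_crossingPoint (h : g w < g v) : g (crossingPoint g ε v w) = ε := by
  have : g v - g w ≠ 0 := (sub_pos.2 h).ne'
  simp only [crossingPoint, map_smul, map_add, smul_eq_mul]
  field_simp
  ring

theorem crossingPoint_mem_segment (hv : ε ≤ g v) (hw : g w < ε) :
    crossingPoint g ε v w ∈ segment ℝ v w := by
  have hpos : 0 < g v - g w := by linarith
  refine ⟨(g v - g w)⁻¹ * (ε - g w), (g v - g w)⁻¹ * (g v - ε),
    mul_nonneg (by positivity) (by linarith), mul_nonneg (by positivity) (by linarith), ?_, ?_⟩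
  · field_simp
    ring
  · rw [crossingPoint]
    module

theorem mem_segment_crossingPoint (hv : ε ≤ g v) (hw : g w < ε) {y : E} (hy : y ∈ segment ℝ v w)
    (hgy : ε ≤ g y) : y ∈ segment ℝ v (crossingPoint g ε v w) := by
  obtain ⟨a, b, -, hb, hab, rfl⟩ := hy
  obtain rfl : a = 1 - b := by linarith
  simp only [map_add, map_smul, smul_eq_mul] at hgy
  rcases hv.eq_or_lt with hv | hv
  · obtain rfl : b = 0 := by nlinarith
    simpa using left_mem_segment ℝ v _
  · have hpos : 0 < g v - g w := by linarith
    have hpos' : 0 < g v - ε := by linarith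
    refine ⟨1 - b * (g v - g w) / (g v - ε), b * (g v - g w) / (g v - ε), ?_, by positivity,
      by ring, ?_⟩
    · rw [sub_nonneg, div_le_one hpos']
      linarith
    · rw [crossingPoint]
      match_scalars <;> field_simp
      ring

-- `crossingPoint g ε · w` is a projective map, so it carries segments to segments.
theorem convex_setOf_crossingPoint_left_mem (g : Dual ℝ E) (ε : ℝ) (w : E) {K : Set E}
    (hK : Convex ℝ K) : Convex ℝ {v | g w < g v ∧ crossingPoint g ε v w ∈ K} := by
  rintro v ⟨hv, hvK⟩ v' ⟨hv', hvK'⟩ a b ha hb hab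
  have hpos : 0 < g (a • v + b • v') - g w := by
    have := convex_halfSpace_gt g.isLinear (g w) hv hv' ha hb hab
    exact sub_pos.2 this
  have hgw : g w = a * g w + b * g w := by rw [← add_mul, hab, one_mul]
  refine ⟨sub_pos.1 hpos, ?_⟩
  have hweights : a * (g v - g w) / (g (a • v + b • v') - g w) +
      b * (g v' - g w) / (g (a • v + b • v') - g w) = 1 := by
    rw [← add_div, div_eq_one_iff_eq hpos.ne']
    simp only [map_add, map_smul, smul_eq_mul]
    linarith
  convert hK hvK hvK' (div_nonneg (mul_nonneg ha (sub_pos.2 hv).le) hpos.le)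
    (div_nonneg (mul_nonneg hb (sub_pos.2 hv').le) hpos.le) hweights using 1
  have hvw : g v - g w ≠ 0 := (sub_pos.2 hv).ne'
  have hvw' : g v' - g w ≠ 0 := (sub_pos.2 hv').ne'
  simp only [crossingPoint]
  have := hpos.ne'
  obtain rfl : b = 1 - a := by linarith
  simp only [map_add, map_smul, smul_eq_mul] at this ⊢
  match_scalars <;> field_simp
  ring

theorem convex_setOf_crossingPoint_right_mem (g : Dual ℝ E) (ε : ℝ) (v : E) {K : Set E}
    (hK : Convex ℝ K) : Convex ℝ {w | g w < g v ∧ crossingPoint g ε v w ∈ K} := by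
  simpa only [LinearMap.neg_apply, neg_lt_neg_iff, crossingPoint_neg] using
    convex_setOf_crossingPoint_left_mem (-g) (-ε) v hK

theorem crossingPoint_mem_convexHull_image2 {A B : Set E} (hAB : ∀ v ∈ A, ∀ w ∈ B, g w < g v)
    (hv : v ∈ convexHull ℝ A) (hw : w ∈ convexHull ℝ B) :
    crossingPoint g ε v w ∈ convexHull ℝ (Set.image2 (crossingPoint g ε) A B) := by
  have hK := convex_convexHull ℝ (Set.image2 (crossingPoint g ε) A B)
  have hB : B ⊆ {w | g w < g v ∧
      crossingPoint g ε v w ∈ convexHull ℝ (Set.image2 (crossingPoint g ε) A B)} := by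
    intro b hb
    refine convexHull_min (fun a ha => ?_) (convex_setOf_crossingPoint_left_mem g ε b hK) hv
    exact ⟨hAB a ha b hb, subset_convexHull ℝ _ (Set.mem_image2_of_mem ha hb)⟩
  exact (convexHull_min hB (convex_setOf_crossingPoint_right_mem g ε v hK) hw).2

open scoped Classical in
/-- The vertices that are left, together with the new ones on the edges crossing the hyperplane,
when the polytope with vertex set `V` is cut down to the half-space `ε ≤ g`. -/
def cutVertices (V : Finset E) (g : Dual ℝ E) (ε : ℝ) : Finset E :=
  {v ∈ V | ε ≤ g v} ∪ Finset.image₂ (crossingPoint g ε) {v ∈ V | ε ≤ g v} {v ∈ V | g v < ε}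

theorem card_cutVertices_le (V : Finset E) (g : Dual ℝ E) (ε : ℝ) :
    #(cutVertices V g ε) ≤ #V ^ 2 := by
  classical
  have hsplit : #{v ∈ V | ε ≤ g v} + #{v ∈ V | g v < ε} = #V := by
    simpa only [not_le] using Finset.card_filter_add_card_filter_not (s := V) (fun v => ε ≤ g v)
  calc #(cutVertices V g ε)
      ≤ #{v ∈ V | ε ≤ g v} + #{v ∈ V | ε ≤ g v} * #{v ∈ V | g v < ε} := by
        rw [cutVertices]
        exact (Finset.card_union_le _ _).trans (by gcongr; exact Finset.card_image₂_le _ _ _)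
    _ ≤ #V ^ 2 := by rw [← hsplit]; nlinarith [Nat.le_self_pow two_ne_zero #{v ∈ V | ε ≤ g v}]

theorem convexHull_cutVertices (V : Finset E) (g : Dual ℝ E) (ε : ℝ) :
    convexHull ℝ (cutVertices V g ε : Set E) = convexHull ℝ (V : Set E) ∩ {x | ε ≤ g x} := by
  classical
  apply subset_antisymm
  · refine convexHull_min (fun x hx => ?_)
      ((convex_convexHull ℝ _).inter (convex_halfSpace_ge g.isLinear ε))
    rcases Finset.mem_union.1 hx with hx | hx
    · rw [Finset.mem_filter] at hx
      exact ⟨subset_convexHull ℝ _ hx.1, hx.2⟩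
    · obtain ⟨v, hv, w, hw, rfl⟩ := Finset.mem_image₂.1 hx
      rw [Finset.mem_filter] at hv hw
      exact ⟨segment_subset_convexHull hv.1 hw.1 (crossingPoint_mem_segment hv.2 hw.2),
        (map_crossingPoint (hw.2.trans_le hv.2)).ge⟩
  · rintro y ⟨hy, hgy : ε ≤ g y⟩
    set above : Set E := {v | v ∈ V ∧ ε ≤ g v} with habove
    set below : Set E := {v | v ∈ V ∧ g v < ε} with hbelow
    have hcut : (cutVertices V g ε : Set E) =
        above ∪ Set.image2 (crossingPoint g ε) above below := by
      simp [cutVertices, habove, hbelow]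
    have hV : (V : Set E) = above ∪ below := by
      ext v
      simp [habove, hbelow, ← and_or_left, le_or_gt]
    rw [hV] at hy
    rw [hcut]
    rcases below.eq_empty_or_nonempty with hbelow_empty | hbelow_nonempty
    · exact convexHull_mono Set.subset_union_left (by simpa [hbelow_empty] using hy)
    rcases above.eq_empty_or_nonempty with habove_empty | habove_nonempty
    · rw [habove_empty, Set.empty_union] at hy
      have : g y < ε := convexHull_min (fun v hv => hv.2) (convex_halfSpace_lt g.isLinear ε) hy
      exact absurd hgy this.not_ge
    rw [convexHull_union habove_nonempty hbelow_nonempty, mem_convexJoin] at hy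
    obtain ⟨p, hp, q, hq, hy⟩ := hy
    have hgp : ε ≤ g p := convexHull_min (fun v hv => hv.2) (convex_halfSpace_ge g.isLinear ε) hp
    have hgq : g q < ε := convexHull_min (fun v hv => hv.2) (convex_halfSpace_lt g.isLinear ε) hq
    exact (convex_convexHull ℝ _).segment_subset (convexHull_mono Set.subset_union_left hp)
      (convexHull_mono Set.subset_union_right (crossingPoint_mem_convexHull_image2
        (fun v hv w hw => hw.2.trans_le hv.2) hp hq)) (mem_segment_crossingPoint hgp hgq hy hgy)

end HalfSpace

section Caratheodory

variable {E : Type*} [AddCommGroup E] [Module ℝ E] [FiniteDimensional ℝ E]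

theorem exists_card_le_finrank_succ_mem_convexHull {V : Set E} {x : E}
    (hx : x ∈ convexHull ℝ V) :
    ∃ T : Finset E, ↑T ⊆ V ∧ #T ≤ finrank ℝ E + 1 ∧ x ∈ convexHull ℝ (T : Set E) := by
  rw [convexHull_eq_union] at hx
  simp only [Set.mem_iUnion] at hx
  obtain ⟨T, hTV, hT, hxT⟩ := hx
  refine ⟨T, hTV, ?_, hxT⟩
  calc #T = Fintype.card T := (Fintype.card_coe T).symm
    _ ≤ finrank ℝ (vectorSpan ℝ (Set.range ((↑) : T → E))) + 1 := hT.card_le_finrank_succ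
    _ ≤ finrank ℝ E + 1 := by gcongr; exact Submodule.finrank_le _

theorem exists_subset_convexHull_card_le_finrank_succ {V Y : Finset E}
    (hYV : (Y : Set E) ⊆ convexHull ℝ (V : Set E)) {m : ℕ} (hm : 2 ^ #V * m ≤ #Y) :
    ∃ V' ⊆ V, #V' ≤ finrank ℝ E + 1 ∧
      ∃ Y' ⊆ Y, m ≤ #Y' ∧ (Y' : Set E) ⊆ convexHull ℝ (V' : Set E) := by
  classical
  choose! T hTV hTcard hT using
    fun y (hy : y ∈ Y) => exists_card_le_finrank_succ_mem_convexHull (hYV hy)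
  obtain ⟨V', hV', hfiber⟩ := Finset.exists_le_card_fiber_of_mul_le_card_of_maps_to
    (s := Y) (t := {S ∈ V.powerset | #S ≤ finrank ℝ E + 1}) (f := T) (n := m)
    (fun y hy => Finset.mem_filter.2
      ⟨Finset.mem_powerset.2 (Finset.coe_subset.1 (hTV y hy)), hTcard y hy⟩)
    ⟨∅, by simp⟩ ((Nat.mul_le_mul_right _
      ((Finset.card_filter_le _ _).trans (Finset.card_powerset V).le)).trans hm)
  rw [Finset.mem_filter, Finset.mem_powerset] at hV'
  refine ⟨V', hV'.1, hV'.2, _, Finset.filter_subset _ _, hfiber, fun y hy => ?_⟩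
  obtain ⟨hyY, rfl⟩ := Finset.mem_filter.1 hy
  exact hT y hyY

end Caratheodory

section ConvexCell

variable {E : Type*} [AddCommGroup E] [Module ℝ E]

theorem exists_nonneg_forall_neg_le_coord {ι : Type*} [Finite ι] (b : AffineBasis ι ℝ E)
    (X : Finset E) : ∃ s : ℝ, 0 ≤ s ∧ ∀ x ∈ X, ∀ i, -s ≤ b.coord i x := by
  cases nonempty_fintype ι
  refine ⟨∑ x ∈ X, ∑ i, |b.coord i x|, by positivity, fun x hx i => neg_le_of_abs_le ?_⟩
  calc |b.coord i x| ≤ ∑ i, |b.coord i x| :=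
        Finset.single_le_sum (f := fun i => |b.coord i x|) (fun _ _ => abs_nonneg _)
          (Finset.mem_univ i)
    _ ≤ ∑ x ∈ X, ∑ i, |b.coord i x| :=
        Finset.single_le_sum (f := fun x => ∑ i, |b.coord i x|) (fun _ _ => by positivity) hx

/-- A finite point set together with the vertices of a polytope that contains it. The bound on
the number of vertices is what a simplex has; it keeps the cost of a later cut independent of how
many cuts were made before. -/
structure ConvexCell (E : Type*) [AddCommGroup E] [Module ℝ E] where
  points : Finset E
  vertices : Finset E
  card_vertices_le : #vertices ≤ finrank ℝ E + 1
  points_subset : (points : Set E) ⊆ convexHull ℝ (vertices : Set E)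

namespace ConvexCell

/-- The polytope of a cell. -/
def region (c : ConvexCell E) : Set E :=
  convexHull ℝ (c.vertices : Set E)

theorem convex_region (c : ConvexCell E) : Convex ℝ c.region :=
  convex_convexHull ℝ _

/-- `c ≤ c'` means that both the points and the region of `c` are contained in those of `c'`;
the vertices are not compared. -/
instance : Preorder (ConvexCell E) :=
  Preorder.lift fun c => (c.points, c.region)

theorem points_subset_of_le {c c' : ConvexCell E} (h : c ≤ c') : c.points ⊆ c'.points :=
  h.1

theorem region_subset_of_le {c c' : ConvexCell E} (h : c ≤ c') : c.region ⊆ c'.region :=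
  h.2

/-- The cell with the same polytope and fewer points. -/
def restrict (c : ConvexCell E) (Y : Finset E) (hY : Y ⊆ c.points) : ConvexCell E where
  points := Y
  vertices := c.vertices
  card_vertices_le := c.card_vertices_le
  points_subset := (Finset.coe_subset.2 hY).trans c.points_subset

theorem restrict_le (c : ConvexCell E) (Y : Finset E) (hY : Y ⊆ c.points) :
    c.restrict Y hY ≤ c :=
  ⟨hY, subset_rfl⟩

-- A large homothetic copy of a simplex, with its centroid as centre, contains `X`.
theorem exists_points_eq [FiniteDimensional ℝ E] (X : Finset E) :
    ∃ c : ConvexCell E, c.points = X := by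
  classical
  obtain ⟨b⟩ := AffineBasis.exists_affineBasis_of_finiteDimensional
    (ι := Fin (finrank ℝ E + 1)) (k := ℝ) (P := E) (by simp)
  obtain ⟨s, hs, hcoord⟩ := exists_nonneg_forall_neg_le_coord b X
  obtain ⟨R, hR⟩ : ∃ R : ℝ, R = 1 + (finrank ℝ E + 1) * s := ⟨_, rfl⟩
  have hRpos : 0 < R := by rw [hR]; positivity
  set enlarge : E →ᵃ[ℝ] E := AffineMap.homothety (Finset.univ.centroid ℝ b) R with henlarge
  have hshrink : ∀ x ∈ X, AffineMap.homothety (Finset.univ.centroid ℝ b) R⁻¹ x ∈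
      convexHull ℝ (Set.range b) := by
    intro x hx
    rw [b.convexHull_eq_nonneg_coord]
    intro i
    have : b.coord i (AffineMap.homothety (Finset.univ.centroid ℝ b) R⁻¹ x) =
        R⁻¹ * (s + b.coord i x) := by
      rw [AffineMap.homothety_eq_lineMap, AffineMap.apply_lineMap,
        b.coord_apply_centroid (Finset.mem_univ i), AffineMap.lineMap_apply_ring']
      simp only [Finset.card_univ, Fintype.card_fin, Nat.cast_add, Nat.cast_one]
      field_simp
      rw [hR]
      ring
    rw [this]
    exact mul_nonneg (by positivity) (by linarith [hcoord x hx i])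
  refine ⟨⟨X, Finset.univ.image fun i => enlarge (b i),
    Finset.card_image_le.trans (by simp), ?_⟩, rfl⟩
  intro x hx
  have himage : enlarge '' convexHull ℝ (Set.range b) =
      convexHull ℝ (Finset.univ.image fun i => enlarge (b i) : Finset E) := by
    rw [AffineMap.image_convexHull, ← Set.range_comp, Finset.coe_image, Finset.coe_univ,
      Set.image_univ]
    rfl
  rw [← himage]
  refine ⟨_, hshrink x hx, ?_⟩
  rw [henlarge, ← AffineMap.homothety_mul_apply, mul_inv_cancel₀ hRpos.ne', AffineMap.homothety_one,
    AffineMap.id_apply]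

theorem exists_le_forall_pos [FiniteDimensional ℝ E] (c : ConvexCell E) (g : Dual ℝ E) {m : ℕ}
    (hm : 2 ^ (finrank ℝ E + 1) ^ 2 * m ≤ #{x ∈ c.points | 0 < g x}) :
    ∃ c' ≤ c, m ≤ #c'.points ∧ ∀ x ∈ c'.region, 0 < g x := by
  classical
  obtain ⟨ε, hε, hgε⟩ : ∃ ε > 0, ∀ x ∈ ({x ∈ c.points | 0 < g x} : Finset E), ε ≤ g x := by
    rcases ({x ∈ c.points | 0 < g x} : Finset E).eq_empty_or_nonempty with h | h
    · exact ⟨1, one_pos, by simp [h]⟩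
    · obtain ⟨y, hy, hmin⟩ := Finset.exists_min_image _ g h
      exact ⟨g y, (Finset.mem_filter.1 hy).2, hmin⟩
  have hcut := convexHull_cutVertices c.vertices g ε
  have hYcut : (({x ∈ c.points | 0 < g x} : Finset E) : Set E) ⊆
      convexHull ℝ (cutVertices c.vertices g ε : Set E) := fun x hx =>
    hcut ▸ ⟨c.points_subset (Finset.mem_filter.1 hx).1, hgε x hx⟩
  have hcutcard : #(cutVertices c.vertices g ε) ≤ (finrank ℝ E + 1) ^ 2 :=
    (card_cutVertices_le _ _ _).trans (Nat.pow_le_pow_left c.card_vertices_le 2)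
  obtain ⟨V, hV, hVcard, Y, hY, hYcard, hYV⟩ :=
    exists_subset_convexHull_card_le_finrank_succ hYcut
      ((Nat.mul_le_mul_right m (Nat.pow_le_pow_right two_pos hcutcard)).trans hm)
  have hVcut : convexHull ℝ (V : Set E) ⊆ convexHull ℝ (c.vertices : Set E) ∩ {x | ε ≤ g x} :=
    hcut ▸ convexHull_mono (Finset.coe_subset.2 hV)
  exact ⟨⟨Y, V, hVcard, hYV⟩, ⟨hY.trans (Finset.filter_subset _ _), fun x hx => (hVcut hx).1⟩,
    hYcard, fun x hx => hε.trans_le (hVcut hx).2⟩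

end ConvexCell

end ConvexCell

section Separation

variable {E ι : Type*} [AddCommGroup E] [Module ℝ E]

/-- A linear hyperplane puts each `C i` strictly on the side prescribed by the sign `σ i`. -/
def SignedSeparable (C : ι → Set E) (σ : ι → ℤˣ) : Prop :=
  ∃ g : Dual ℝ E, ∀ i, ∀ x ∈ C i, 0 < σ i • g x

theorem SignedSeparable.mono {C D : ι → Set E} {σ : ι → ℤˣ} (h : SignedSeparable D σ)
    (hCD : ∀ i, C i ⊆ D i) : SignedSeparable C σ :=
  h.imp fun _ hg i x hx => hg i x (hCD i hx)

/-- Every choice of one vector from each set is linearly independent; for `finrank ℝ E` sets this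
says that no linear hyperplane crosses all of them. -/
def WellSeparated (C : ι → Set E) : Prop :=
  ∀ y : ι → E, (∀ i, y i ∈ C i) → LinearIndependent ℝ y

theorem WellSeparated.mono {C D : ι → Set E} (hD : WellSeparated D) (hCD : ∀ i, C i ⊆ D i) :
    WellSeparated C :=
  fun y hy => hD y fun i => hCD i (hy i)

-- A dependency `∑ w i • y i = 0` contradicts separation with the signs of the coefficients `w i`.
theorem wellSeparated_of_forall_signedSeparable [Finite ι] {C : ι → Set E}
    (hC : ∀ σ, SignedSeparable C σ) : WellSeparated C := by
  classical
  have := Fintype.ofFinite ι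
  intro y hy
  by_contra hdep
  obtain ⟨w, hw, i₀, hi₀⟩ := Fintype.not_linearIndependent_iff.1 hdep
  obtain ⟨g, hg⟩ := hC fun i => if 0 ≤ w i then 1 else -1
  have hterm : ∀ i, 0 ≤ w i * g (y i) ∧ (w i ≠ 0 → 0 < w i * g (y i)) := by
    intro i
    have hgi := hg i (y i) (hy i)
    rcases le_or_gt 0 (w i) with hwi | hwi
    · simp only [hwi, if_true, one_smul] at hgi
      exact ⟨mul_nonneg hwi hgi.le, fun h => mul_pos (hwi.lt_of_ne' h) hgi⟩
    · simp only [hwi.not_ge, if_false, Units.neg_smul, one_smul, Left.neg_pos_iff] at hgi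
      exact ⟨(mul_pos_of_neg_of_neg hwi hgi).le, fun _ => mul_pos_of_neg_of_neg hwi hgi⟩
  have hzero : ∑ i, w i * g (y i) = 0 := by simpa using congrArg g hw
  exact hzero.not_gt
    (Finset.sum_pos' (fun i _ => (hterm i).1) ⟨i₀, Finset.mem_univ _, (hterm i₀).2 hi₀⟩)

theorem WellSeparated.exists_not_crosses [FiniteDimensional ℝ E] [Fintype ι]
    (hι : Fintype.card ι = finrank ℝ E) {C : ι → Set E} (hC : WellSeparated C)
    {H : Submodule ℝ E} (hH : H ≠ ⊤) : ∃ i, ¬ Crosses H (C i) := by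
  by_contra! hcross
  choose y hyH hyC using hcross
  have hspan := (hC y hyC).span_eq_top_of_card_eq_finrank' hι
  exact hH (top_le_iff.1 (hspan ▸ Submodule.span_le.2 (Set.range_subset_iff.2 hyH)))

theorem wellSeparated_of_forall_exists_not_crosses [FiniteDimensional ℝ E] [Fintype ι]
    (hι : Fintype.card ι ≤ finrank ℝ E) {C : ι → Set E}
    (hC : ∀ H : Submodule ℝ E, H ≠ ⊤ → ∃ i, ¬ Crosses H (C i)) : WellSeparated C := by
  intro y hy
  by_contra hdep
  obtain ⟨i, hi⟩ := hC (Submodule.span ℝ (Set.range y)) fun hspan =>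
    hdep (linearIndependent_of_top_le_span_of_card_le_finrank hspan.ge hι)
  exact hi ⟨y i, Submodule.subset_span ⟨i, rfl⟩, hy i⟩

namespace ConvexCell

/-- The factor by which a point set shrinks when a cell is refined to obey one sign pattern. -/
def separationConst (n : ℕ) : ℕ :=
  (n + 1) ^ 2 * 2 ^ (n + 1) ^ 2

theorem separationConst_pos (n : ℕ) : 0 < separationConst n := by
  unfold separationConst
  positivity

variable [FiniteDimensional ℝ E] [Nontrivial E] [Fintype ι]

theorem exists_le_signedSeparable (hι : Fintype.card ι ≤ finrank ℝ E) {c : ι → ConvexCell E}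
    (hc : ∀ i, LinearGeneralPosition (c i).points) (σ : ι → ℤˣ) {m : ℕ} (hm : 1 ≤ m)
    (hcard : ∀ i, separationConst (finrank ℝ E) * m ≤ #(c i).points) :
    ∃ c' ≤ c, (∀ i, m ≤ #(c' i).points) ∧ SignedSeparable (fun i => (c' i).region) σ := by
  obtain ⟨g, hg⟩ := LinearGeneralPosition.exists_signed_halfSpace hι hc σ
    (m := 2 ^ (finrank ℝ E + 1) ^ 2 * m) (Nat.succ_le_of_lt (by positivity))
    fun i => by simpa only [separationConst, mul_assoc] using hcard i
  choose c' hle hcard' hpos using fun i => (c i).exists_le_forall_pos (σ i • g) (hg i)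
  exact ⟨c', hle, hcard', g, hpos⟩

theorem exists_le_forall_mem_signedSeparable (hι : Fintype.card ι ≤ finrank ℝ E)
    {c : ι → ConvexCell E} (hc : ∀ i, LinearGeneralPosition (c i).points) (S : Finset (ι → ℤˣ))
    {m : ℕ} (hm : 1 ≤ m) (hcard : ∀ i, separationConst (finrank ℝ E) ^ #S * m ≤ #(c i).points) :
    ∃ c' ≤ c, (∀ i, m ≤ #(c' i).points) ∧
      ∀ σ ∈ S, SignedSeparable (fun i => (c' i).region) σ := by
  classical
  induction S using Finset.induction_on generalizing m with
  | empty => exact ⟨c, le_rfl, by simpa using hcard, by simp⟩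
  | insert σ S hσ ih =>
    obtain ⟨c₁, hle₁, hcard₁, hsep₁⟩ := ih
      (m := separationConst (finrank ℝ E) * m) (Nat.mul_pos (separationConst_pos _) hm)
      fun i => by
        simpa only [Finset.card_insert_of_notMem hσ, pow_succ, mul_assoc] using hcard i
    obtain ⟨c₂, hle₂, hcard₂, hsep₂⟩ := exists_le_signedSeparable hι
      (fun i => (hc i).mono (points_subset_of_le (hle₁ i))) σ hm hcard₁
    refine ⟨c₂, hle₂.trans hle₁, hcard₂, fun τ hτ => ?_⟩
    rcases Finset.mem_insert.1 hτ with rfl | hτ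
    · exact hsep₂
    · exact (hsep₁ τ hτ).mono fun i => region_subset_of_le (hle₂ i)

theorem exists_le_wellSeparated (hι : Fintype.card ι ≤ finrank ℝ E) {c : ι → ConvexCell E}
    (hc : ∀ i, LinearGeneralPosition (c i).points) {m : ℕ} (hm : 1 ≤ m)
    (hcard : ∀ i, separationConst (finrank ℝ E) ^ 2 ^ Fintype.card ι * m ≤ #(c i).points) :
    ∃ c' ≤ c, (∀ i, m ≤ #(c' i).points) ∧ WellSeparated fun i => (c' i).region := by
  classical
  obtain ⟨c', hle, hcard', hsep⟩ := exists_le_forall_mem_signedSeparable hι hc Finset.univ hm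
    (by simpa using hcard)
  exact ⟨c', hle, hcard',
    wellSeparated_of_forall_signedSeparable fun σ => hsep σ (Finset.mem_univ σ)⟩

end ConvexCell

end Separation

section Counting

theorem exists_pairwise_disjoint_subsets_card_eq {α ι : Type*} [Fintype ι] {Y : Finset α} {s : ℕ}
    (h : Fintype.card ι * s ≤ #Y) :
    ∃ Z : ι → Finset α, (∀ i, Z i ⊆ Y) ∧ (∀ i, #(Z i) = s) ∧ Pairwise (Disjoint on Z) := by
  obtain ⟨e⟩ := Embedding.nonempty_of_card_le (α := ι × Fin s) (β := Y) (by simpa using h)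
  refine ⟨fun i => Finset.univ.map (((Embedding.sectR i (Fin s)).trans e).trans
    (Embedding.subtype (· ∈ Y))), fun i x hx => ?_, by simp, fun i j hij => ?_⟩
  · obtain ⟨a, -, rfl⟩ := Finset.mem_map.1 hx
    exact (e (i, a)).2
  · refine Finset.disjoint_left.2 fun x hxi hxj => ?_
    obtain ⟨a, -, rfl⟩ := Finset.mem_map.1 hxi
    obtain ⟨b, -, hb⟩ := Finset.mem_map.1 hxj
    exact hij (congrArg Prod.fst (e.injective (Subtype.ext hb))).symm

open scoped Classical in
theorem card_filter_fin_succ_pi_le {κ : Type*} [Fintype κ] {d t B : ℕ}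
    (hκ : Fintype.card κ = d + 1) (p : (Fin (t + 1) → κ) → Prop) (i₀ : κ)
    (hi₀ : ∀ x, p x → x 0 ≠ i₀) (hB : ∀ i, #{q : Fin t → κ | p (Fin.cons i q)} ≤ B) :
    #{x | p x} ≤ B * d := by
  have hbound := Finset.card_le_mul_card_image_of_maps_to (s := {x | p x})
    (t := Finset.univ.erase i₀) (f := fun x => x 0) (by simpa using hi₀) B fun i _ => by
    refine (Finset.card_le_card_of_injOn Fin.tail (fun x hx => ?_) fun x hx y hy hxy => ?_).trans
      (hB i)
    · obtain ⟨hpx, rfl⟩ : p x ∧ x 0 = i := by simpa using hx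
      simpa using hpx
    · obtain ⟨-, hx0⟩ : p x ∧ x 0 = i := by simpa using hx
      obtain ⟨-, hy0⟩ : p y ∧ y 0 = i := by simpa using hy
      rw [← Fin.cons_self_tail x, ← Fin.cons_self_tail y, hx0, hy0, hxy]
  simpa [Finset.card_erase_of_mem, hκ] using hbound

variable {α β κ : Type*} [Fintype α] [Fintype κ]

open scoped Classical in
theorem card_filter_apply_mem_mul_card_le {F : (β → κ) → Finset κ} {B : ℕ}
    (hF : ∀ τ, #(F τ) ≤ B) {x : α} {e : β → α} (hx : x ∉ Set.range e) :
    #{φ : α → κ | φ x ∈ F (φ ∘ e)} * Fintype.card κ ≤ B * Fintype.card (α → κ) := by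
  have hfiber : #{φ : α → κ | φ x ∈ F (φ ∘ e)} ≤ B * Fintype.card ({y // y ≠ x} → κ) := by
    refine Finset.card_le_mul_card_image_of_maps_to
      (f := fun φ (y : {y // y ≠ x}) => φ y) (fun _ _ => Finset.mem_univ _) B fun ψ _ => ?_
    rcases Finset.eq_empty_or_nonempty
      ({φ ∈ ({φ | φ x ∈ F (φ ∘ e)} : Finset (α → κ)) | (fun y : {y // y ≠ x} => φ y) = ψ}) with
      hempty | ⟨φ₀, hφ₀⟩
    · simp [hempty]
    · refine (Finset.card_le_card_of_injOn (fun φ => φ x) (fun φ hφ => ?_)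
        fun φ hφ φ' hφ' heq => ?_).trans (hF (φ₀ ∘ e))
      · have hcomp : φ ∘ e = φ₀ ∘ e := funext fun j => congrFun
          ((Finset.mem_filter.1 hφ).2.trans (Finset.mem_filter.1 hφ₀).2.symm)
          ⟨e j, fun h => hx ⟨j, h⟩⟩
        have hmem : φ x ∈ F (φ ∘ e) := by simpa using (Finset.mem_filter.1 hφ).1
        exact hcomp ▸ hmem
      · funext y
        by_cases hy : y = x
        · exact hy ▸ heq
        · exact congrFun ((Finset.mem_filter.1 hφ).2.trans (Finset.mem_filter.1 hφ').2.symm) ⟨y, hy⟩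
  have hsplit : Fintype.card (α → κ) = Fintype.card κ * Fintype.card ({y // y ≠ x} → κ) := by
    rw [Fintype.card_congr (Equiv.funSplitAt x κ), Fintype.card_prod]
  calc _ ≤ B * Fintype.card ({y // y ≠ x} → κ) * Fintype.card κ := Nat.mul_le_mul_right _ hfiber
    _ = B * Fintype.card (α → κ) := by rw [hsplit]; ring

variable [Fintype β]

-- Union bound over `x` and `e` for a uniformly random `φ`.
theorem exists_forall_apply_notMem {F : (β → κ) → Finset κ} {B : ℕ} (hF : ∀ τ, #(F τ) ≤ B)
    (hκ : Fintype.card α * Fintype.card α ^ Fintype.card β * B < Fintype.card κ) :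
    ∃ φ : α → κ, ∀ x, ∀ e : β → α, x ∉ Set.range e → φ x ∉ F (φ ∘ e) := by
  classical
  by_contra! hbad
  let bad (p : α × (β → α)) : Finset (α → κ) :=
    {φ | p.1 ∉ Set.range p.2 ∧ φ p.1 ∈ F (φ ∘ p.2)}
  have hbad_card : ∀ p, #(bad p) * Fintype.card κ ≤ B * Fintype.card (α → κ) := by
    rintro ⟨x, e⟩
    by_cases hx : x ∈ Set.range e
    · simp only [bad, hx, not_true_eq_false, false_and, Finset.filter_false, Finset.card_empty,
        zero_mul, Nat.zero_le]
    · simpa only [bad, hx, not_false_eq_true, true_and] using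
        card_filter_apply_mem_mul_card_le hF hx
  have hcover : Fintype.card (α → κ) ≤ ∑ p, #(bad p) := by
    refine (Finset.card_le_card fun φ _ => ?_).trans (Finset.card_biUnion_le (s := Finset.univ))
    obtain ⟨x, e, hx, hφ⟩ := hbad φ
    exact Finset.mem_biUnion.2
      ⟨(x, e), Finset.mem_univ _, Finset.mem_filter.2 ⟨Finset.mem_univ _, hx, hφ⟩⟩
  have hpos : 0 < Fintype.card (α → κ) := by
    have : Nonempty κ := Fintype.card_pos_iff.1 (by omega)
    exact Fintype.card_pos
  refine hκ.not_ge (Nat.le_of_mul_le_mul_right ?_ hpos)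
  calc Fintype.card κ * Fintype.card (α → κ)
      ≤ ∑ p, #(bad p) * Fintype.card κ := by
        rw [← Finset.sum_mul, mul_comm]
        exact Nat.mul_le_mul_right _ hcover
    _ ≤ ∑ _p : α × (β → α), B * Fintype.card (α → κ) := Finset.sum_le_sum fun p _ => hbad_card p
    _ = Fintype.card α * Fintype.card α ^ Fintype.card β * B * Fintype.card (α → κ) := by
        rw [Finset.sum_const, Finset.card_univ, Fintype.card_prod, Fintype.card_fun, smul_eq_mul,
          mul_assoc _ B]

theorem exists_injective_forall_apply_notMem [Nonempty β] {F : (β → κ) → Finset κ} {B : ℕ}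
    (hF : ∀ τ, #(F τ) ≤ B)
    (hκ : Fintype.card α * Fintype.card α ^ Fintype.card β * (B + Fintype.card β) <
      Fintype.card κ) :
    ∃ φ : α → κ, Injective φ ∧ ∀ x, ∀ e : β → α, x ∉ Set.range e → φ x ∉ F (φ ∘ e) := by
  classical
  have hF' : ∀ τ : β → κ, #(F τ ∪ Finset.univ.image τ) ≤ B + Fintype.card β := fun τ =>
    (Finset.card_union_le _ _).trans (Nat.add_le_add (hF τ) Finset.card_image_le)
  obtain ⟨φ, hφ⟩ := exists_forall_apply_notMem hF' hκ
  refine ⟨φ, fun x y hxy => ?_, fun x e hx h => hφ x e hx (Finset.mem_union_left _ h)⟩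
  by_contra hne
  refine hφ x (fun _ => y) (by simpa using hne) (Finset.mem_union_right _ ?_)
  simp [hxy]

end Counting

section Tree

variable {E : Type*} [AddCommGroup E] [Module ℝ E] [FiniteDimensional ℝ E]

namespace ConvexCell

/-- The factor by which point sets shrink from a cell to its `n` well-separated children. -/
def branchingConst (n : ℕ) : ℕ :=
  n * separationConst n ^ 2 ^ n

theorem branchingConst_pos {n : ℕ} (hn : 0 < n) : 0 < branchingConst n :=
  Nat.mul_pos hn (pow_pos (separationConst_pos n) _)

theorem exists_children [Nontrivial E] {ι : Type*} [Fintype ι] (hι : Fintype.card ι = finrank ℝ E)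
    {c : ConvexCell E} (hc : LinearGeneralPosition c.points) {m : ℕ} (hm : 1 ≤ m)
    (hcard : branchingConst (finrank ℝ E) * m ≤ #c.points) :
    ∃ c' : ι → ConvexCell E, (∀ i, c' i ≤ c) ∧ Pairwise (Disjoint on fun i => (c' i).points) ∧
      (∀ i, m ≤ #(c' i).points) ∧ WellSeparated fun i => (c' i).region := by
  obtain ⟨Z, hZ, hZcard, hZdisj⟩ := exists_pairwise_disjoint_subsets_card_eq (ι := ι)
    (s := separationConst (finrank ℝ E) ^ 2 ^ finrank ℝ E * m) (Y := c.points)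
    (by simpa only [branchingConst, hι, mul_assoc] using hcard)
  obtain ⟨c', hle, hcard', hsep⟩ := exists_le_wellSeparated hι.le
    (c := fun i => c.restrict (Z i) (hZ i)) (fun i => hc.mono (hZ i)) hm
    (fun i => by simp only [restrict, hι, hZcard]; rfl)
  exact ⟨c', fun i => (hle i).trans (c.restrict_le _ _),
    fun i j hij => (hZdisj hij).mono (points_subset_of_le (hle i)) (points_subset_of_le (hle j)),
    hcard', hsep⟩

open scoped Classical in
theorem exists_tree {d : ℕ} (hE : finrank ℝ E = d + 1) {m : ℕ} (hm : 1 ≤ m) (t : ℕ)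
    {root : ConvexCell E} (hroot : LinearGeneralPosition root.points)
    (hcard : branchingConst (d + 1) ^ t * m ≤ #root.points) :
    ∃ c : (Fin t → Fin (d + 1)) → ConvexCell E, (∀ i, c i ≤ root) ∧
      Pairwise (Disjoint on fun i => (c i).points) ∧ (∀ i, m ≤ #(c i).points) ∧
      ∀ H : Submodule ℝ E, H ≠ ⊤ → #{i | Crosses H (c i).region} ≤ d ^ t := by
  induction t generalizing root with
  | zero =>
    exact ⟨fun _ => root, fun _ => le_rfl, Subsingleton.pairwise, by simpa using hcard,
      fun H _ => (Finset.card_le_univ _).trans (by simp)⟩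
  | succ t ih =>
    have : Nontrivial E := nontrivial_of_finrank_pos (R := ℝ) (by omega)
    have hconst : 0 < branchingConst (d + 1) := branchingConst_pos d.succ_pos
    obtain ⟨child, hle, hdisj, hchild, hsep⟩ := exists_children (ι := Fin (d + 1)) (by simp [hE])
      hroot (m := branchingConst (d + 1) ^ t * m) (Nat.mul_pos (pow_pos hconst t) hm)
      (by rwa [hE, ← mul_assoc, ← pow_succ'])
    choose leaf hleaf_le hleaf_disj hleaf_card hleaf_cross using fun i =>
      ih (hroot.mono (points_subset_of_le (hle i))) (hchild i)
    refine ⟨fun p => leaf (p 0) (Fin.tail p), fun p => (hleaf_le _ _).trans (hle _),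
      fun p q hpq => ?_, fun p => hleaf_card _ _, fun H hH => ?_⟩
    · by_cases h0 : p 0 = q 0
      · have htail : Fin.tail p ≠ Fin.tail q := fun h => hpq <| by
          rw [← Fin.cons_self_tail p, ← Fin.cons_self_tail q, h0, h]
        simpa only [onFun, h0] using hleaf_disj (q 0) htail
      · exact (hdisj h0).mono (points_subset_of_le (hleaf_le _ _))
          (points_subset_of_le (hleaf_le _ _))
    · obtain ⟨i₀, hi₀⟩ := hsep.exists_not_crosses (by simp [hE]) hH
      rw [pow_succ]
      refine card_filter_fin_succ_pi_le (by simp) _ i₀ (fun p hp h0 => hi₀ ?_) fun i => ?_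
      · exact h0 ▸ hp.mono (region_subset_of_le (hleaf_le _ _))
      · simpa using hleaf_cross i H hH

end ConvexCell

end Tree

section CanonicalHyperplane

variable {E : Type*} [AddCommGroup E] [Module ℝ E]

theorem exists_add_smul_apply_eq_zero_and_forall_sign {f g : Dual ℝ E} {W : Finset E}
    (hfg : ∀ w ∈ W, f w = 0 → g w = 0) (hg : ∃ w ∈ W, g w ≠ 0) :
    ∃ s : ℝ, (∃ w ∈ W, f w ≠ 0 ∧ (f + s • g) w = 0) ∧
      ∀ w ∈ W, (0 ≤ f w → 0 ≤ (f + s • g) w) ∧ (f w ≤ 0 → (f + s • g) w ≤ 0) := by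
  -- `-s` is the ratio `f w / g w` of least absolute value.
  obtain ⟨w₁, hw₁, hgw₁⟩ := hg
  obtain ⟨w₀, hw₀, hmin⟩ := Finset.exists_min_image {w ∈ W | g w ≠ 0} (fun w => |f w / g w|)
    ⟨w₁, Finset.mem_filter.2 ⟨hw₁, hgw₁⟩⟩
  obtain ⟨hw₀W, hgw₀⟩ := Finset.mem_filter.1 hw₀
  refine ⟨-(f w₀ / g w₀), ⟨w₀, hw₀W, mt (hfg w₀ hw₀W) hgw₀, ?_⟩, fun w hw => ?_⟩
  · simp [div_mul_cancel₀ _ hgw₀]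
  · have hsmall : |f w₀ / g w₀ * g w| ≤ |f w| := by
      by_cases hgw : g w = 0
      · simp [hgw]
      · calc |f w₀ / g w₀ * g w| = |f w₀ / g w₀| * |g w| := abs_mul _ _
          _ ≤ |f w / g w| * |g w| :=
            mul_le_mul_of_nonneg_right (hmin w (Finset.mem_filter.2 ⟨hw, hgw⟩)) (abs_nonneg _)
          _ = |f w| := by rw [← abs_mul, div_mul_cancel₀ _ hgw]
    simp only [LinearMap.add_apply, LinearMap.smul_apply, smul_eq_mul, neg_mul]
    obtain ⟨hlower, hupper⟩ := abs_le.1 hsmall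
    constructor <;> intro hfw
    · rw [abs_of_nonneg hfw] at hupper
      linarith
    · rw [abs_of_nonpos hfw] at hlower
      linarith

-- Tilt the hyperplane, keeping the vectors of `W` on it, until it picks up a new one.
theorem exists_crosses_ker_inf_span_le_span {ι : Type*} {V : ι → Set E} {W : Finset E}
    (hVW : ∀ i, V i ⊆ W) {f : Dual ℝ E} (hf : f ≠ 0)
    (hcross : ∀ i, Crosses (LinearMap.ker f) (convexHull ℝ (V i))) :
    ∃ h : Dual ℝ E, h ≠ 0 ∧ (∀ i, Crosses (LinearMap.ker h) (convexHull ℝ (V i))) ∧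
      LinearMap.ker h ⊓ Submodule.span ℝ (W : Set E) ≤ Submodule.span ℝ {w ∈ W | h w = 0} := by
  classical
  induction hn : #{w ∈ W | f w ≠ 0} using Nat.strong_induction_on generalizing f with
  | _ n ih =>
  by_cases hle : LinearMap.ker f ⊓ Submodule.span ℝ (W : Set E) ≤ Submodule.span ℝ {w ∈ W | f w = 0}
  · exact ⟨f, hf, hcross, hle⟩
  obtain ⟨x, ⟨hfx, hxW⟩, hx⟩ := SetLike.not_le_iff_exists.1 hle
  obtain ⟨g, hgx, hg⟩ := Submodule.exists_le_ker_of_notMem hx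
  have hfg : ∀ w ∈ W, f w = 0 → g w = 0 := fun w hw hfw => hg (Submodule.subset_span ⟨hw, hfw⟩)
  have hgW : ∃ w ∈ W, g w ≠ 0 := by
    by_contra! h
    exact hgx (Submodule.span_le (p := LinearMap.ker g).2 h hxW)
  obtain ⟨s, ⟨w₀, hw₀W, hfw₀, hw₀⟩, hsign⟩ :=
    exists_add_smul_apply_eq_zero_and_forall_sign hfg hgW
  have hne : f + s • g ≠ 0 := by
    have hs : s ≠ 0 := by
      rintro rfl
      exact hfw₀ (by simpa using hw₀)
    intro h
    have : (f + s • g) x = s * g x := by simp [LinearMap.mem_ker.1 hfx]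
    exact mul_ne_zero hs hgx (this.symm.trans (by rw [h, LinearMap.zero_apply]))
  refine ih _ ?_ hne (fun i => ?_) rfl
  · rw [← hn]
    refine Finset.card_lt_card (Finset.ssubset_iff_subset_ne.2 ⟨fun w hw => ?_, fun h => ?_⟩)
    · obtain ⟨hwW, hw⟩ := Finset.mem_filter.1 hw
      refine Finset.mem_filter.2 ⟨hwW, fun hfw => hw ?_⟩
      simp [hfw, hfg w hwW hfw]
    · have : w₀ ∈ ({w ∈ W | (f + s • g) w ≠ 0} : Finset E) :=
        h ▸ Finset.mem_filter.2 ⟨hw₀W, hfw₀⟩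
      exact (Finset.mem_filter.1 this).2 hw₀
  · obtain ⟨⟨v, hv, hfv⟩, w, hw, hfw⟩ := crosses_ker_convexHull_iff.1 (hcross i)
    exact crosses_ker_convexHull_iff.2
      ⟨⟨v, hv, (hsign v (hVW i hv)).1 hfv⟩, w, hw, (hsign w (hVW i hw)).2 hfw⟩

theorem exists_crosses_span_of_forall_crosses [FiniteDimensional ℝ E] {ι : Type*} [Fintype ι]
    (hι : finrank ℝ E ≤ Fintype.card ι) {V : ι → Finset E} {H : Submodule ℝ E} (hH : H ≠ ⊤)
    (hcross : ∀ i, Crosses H (convexHull ℝ (V i : Set E))) :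
    ∃ i₀, ∃ Z : Finset E, (∀ z ∈ Z, ∃ j ≠ i₀, z ∈ V j) ∧ Submodule.span ℝ (Z : Set E) ≠ ⊤ ∧
      Crosses (Submodule.span ℝ (Z : Set E)) (convexHull ℝ (V i₀ : Set E)) := by
  classical
  obtain ⟨f, hf, hHf⟩ := Submodule.exists_le_ker_of_lt_top H (lt_top_iff_ne_top.2 hH)
  set W : Finset E := Finset.univ.biUnion V
  have hVW : ∀ i, (V i : Set E) ⊆ W := fun i =>
    Finset.coe_subset.2 (Finset.subset_biUnion_of_mem V (Finset.mem_univ i))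
  obtain ⟨h, hh, hhcross, hspan⟩ := exists_crosses_ker_inf_span_le_span hVW hf fun i =>
    (hcross i).mono_left hHf
  obtain ⟨b, hbW, hbspan, hbindep⟩ := exists_linearIndependent ℝ {w | w ∈ W ∧ h w = 0}
  have hbfin : b.Finite := W.finite_toSet.subset fun w hw => (hbW hw).1
  lift b to Finset E using hbfin
  have hbtop : Submodule.span ℝ (b : Set E) ≠ ⊤ := fun htop => hh <| LinearMap.ker_eq_top.1 <|
    top_le_iff.1 (htop ▸ Submodule.span_le.2 fun w hw => (hbW hw).2)
  have hbcard : #b < Fintype.card ι :=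
    (finrank_span_finset_eq_card hbindep ▸ Submodule.finrank_lt hbtop).trans_le hι
  have hbV : ∀ z : b, ∃ j, z.1 ∈ V j := fun z => by
    simpa using (Finset.mem_biUnion.1 (hbW z.2).1)
  choose idx hidx using hbV
  obtain ⟨i₀, hi₀⟩ : ∃ i₀, ∀ z, idx z ≠ i₀ := by
    by_contra! hsurj
    exact hbcard.not_ge (by simpa using Fintype.card_le_of_surjective idx hsurj)
  refine ⟨i₀, b, fun z hz => ⟨idx ⟨z, hz⟩, hi₀ _, hidx ⟨z, hz⟩⟩, hbtop, ?_⟩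
  obtain ⟨x, hxh, hx⟩ := hhcross i₀
  have hxW : x ∈ Submodule.span ℝ (W : Set E) :=
    convexHull_min ((hVW i₀).trans Submodule.subset_span) (Submodule.convex _) hx
  exact ⟨x, hbspan ▸ hspan ⟨hxh, hxW⟩, hx⟩

end CanonicalHyperplane

section WellSeparatedFamily

variable {E : Type*} [AddCommGroup E] [Module ℝ E]

namespace ConvexCell

open scoped Classical in
/-- The cells crossed by a proper subspace that is spanned by vertices of the cells `c (τ j)`. -/
def crossedBySpans {β κ : Type*} [Fintype κ] (c : κ → ConvexCell E) (τ : β → κ) : Finset κ :=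
  {i | ∃ Z : Finset E, (∀ z ∈ Z, ∃ j, z ∈ (c (τ j)).vertices) ∧
    Submodule.span ℝ (Z : Set E) ≠ ⊤ ∧ Crosses (Submodule.span ℝ (Z : Set E)) (c i).region}

open scoped Classical in
theorem card_crossedBySpans_le {β κ : Type*} [Fintype β] [Fintype κ] {c : κ → ConvexCell E} {B : ℕ}
    (hB : ∀ H : Submodule ℝ E, H ≠ ⊤ → #{i | Crosses H (c i).region} ≤ B) (τ : β → κ) :
    #(crossedBySpans c τ) ≤ 2 ^ (Fintype.card β * (finrank ℝ E + 1)) * B := by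
  let V : Finset E := Finset.univ.biUnion fun j => (c (τ j)).vertices
  let proper : Finset (Finset E) := {Z ∈ V.powerset | Submodule.span ℝ (Z : Set E) ≠ ⊤}
  have hV : #V ≤ Fintype.card β * (finrank ℝ E + 1) :=
    Finset.card_biUnion_le_card_mul _ _ _ fun j _ => (c (τ j)).card_vertices_le
  have hproper : #proper ≤ 2 ^ (Fintype.card β * (finrank ℝ E + 1)) := calc
    #proper ≤ #V.powerset := Finset.card_filter_le _ _
    _ = 2 ^ #V := Finset.card_powerset V
    _ ≤ _ := Nat.pow_le_pow_right two_pos hV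
  have hcover : crossedBySpans c τ ⊆
      proper.biUnion fun Z => {i | Crosses (Submodule.span ℝ (Z : Set E)) (c i).region} := by
    intro i hi
    obtain ⟨Z, hZ, hZtop, hcross⟩ := (Finset.mem_filter.1 hi).2
    have hZV : Z ⊆ V := fun z hz => by simpa [V] using hZ z hz
    exact Finset.mem_biUnion.2 ⟨Z, Finset.mem_filter.2 ⟨Finset.mem_powerset.2 hZV, hZtop⟩,
      Finset.mem_filter.2 ⟨Finset.mem_univ i, hcross⟩⟩
  calc #(crossedBySpans c τ) ≤ _ := Finset.card_le_card hcover
    _ ≤ #proper * B :=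
      Finset.card_biUnion_le_card_mul _ _ _ fun Z hZ => hB _ (Finset.mem_filter.1 hZ).2
    _ ≤ _ := Nat.mul_le_mul_right _ hproper

variable [FiniteDimensional ℝ E]

theorem wellSeparated_of_forall_notMem_crossedBySpans {d : ℕ} (hE : finrank ℝ E = d + 1)
    {κ : Type*} [Fintype κ] {c : κ → ConvexCell E} {q : Fin (d + 1) → κ}
    (hq : ∀ i, q i ∉ crossedBySpans c (q ∘ i.succAbove)) :
    WellSeparated fun i => (c (q i)).region := by
  classical
  refine wellSeparated_of_forall_exists_not_crosses (by simp [hE]) fun H hH => ?_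
  by_contra! hcross
  obtain ⟨i₀, Z, hZ, hZtop, hZcross⟩ := exists_crosses_span_of_forall_crosses (by simp [hE])
    (V := fun i => (c (q i)).vertices) hH hcross
  refine hq i₀ (Finset.mem_filter.2 ⟨Finset.mem_univ _, Z, fun z hz => ?_, hZtop, hZcross⟩)
  obtain ⟨j, hj, hzj⟩ := hZ z hz
  obtain ⟨l, rfl⟩ := Fin.exists_succAbove_eq hj
  exact ⟨l, hzj⟩

theorem exists_forall_injective_wellSeparated {d : ℕ} (hd : 1 ≤ d) (hE : finrank ℝ E = d + 1)
    {P : Finset E} (hP : LinearGeneralPosition P) {t m M : ℕ} (hm : 1 ≤ m)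
    (hcard : branchingConst (d + 1) ^ t * m ≤ #P)
    (hM : M ^ (d + 1) * (2 ^ (d * (d + 2)) * d ^ t + d) < (d + 1) ^ t) :
    ∃ c : Fin M → ConvexCell E, (∀ i, (c i).points ⊆ P) ∧
      Pairwise (Disjoint on fun i => (c i).points) ∧ (∀ i, m ≤ #(c i).points) ∧
      ∀ q : Fin (d + 1) → Fin M, Injective q → WellSeparated fun i => (c (q i)).region := by
  classical
  obtain ⟨root, rfl⟩ := exists_points_eq P
  obtain ⟨leaf, hle, hdisj, hleaf, hcross⟩ := exists_tree hE hm t hP hcard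
  have : Nonempty (Fin d) := ⟨⟨0, hd⟩⟩
  obtain ⟨φ, hφ, hfree⟩ := exists_injective_forall_apply_notMem (α := Fin M) (β := Fin d)
    (card_crossedBySpans_le hcross) (by simpa [hE, add_assoc, pow_succ'] using hM)
  refine ⟨leaf ∘ φ, fun i => points_subset_of_le (hle _), fun i j hij => hdisj (hφ.ne hij),
    fun i => hleaf _, fun q hq => ?_⟩
  refine wellSeparated_of_forall_notMem_crossedBySpans hE (c := leaf) (q := φ ∘ q) fun i => ?_
  refine hfree (q i) (q ∘ i.succAbove) ?_
  rintro ⟨j, hj⟩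
  exact Fin.succAbove_ne i j (hq hj)

end ConvexCell

end WellSeparatedFamily

section Orientation

variable {E : Type*} [AddCommGroup E] [Module ℝ E]

-- Move the arguments one at a time: in each of them `ω` is linear.
theorem mul_pos_of_multilinearMap_ne_zero {ι : Type*} [Finite ι]
    (ω : MultilinearMap ℝ (fun _ : ι => E) ℝ) {C : ι → Set E} (hC : ∀ i, Convex ℝ (C i))
    (hω : ∀ y, (∀ i, y i ∈ C i) → ω y ≠ 0) {y y' : ι → E} (hy : ∀ i, y i ∈ C i)
    (hy' : ∀ i, y' i ∈ C i) : 0 < ω y * ω y' := by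
  classical
  have := Fintype.ofFinite ι
  suffices hS : ∀ S : Finset ι, 0 < ω y * ω (S.piecewise y' y) by simpa using hS Finset.univ
  intro S
  induction S using Finset.induction_on with
  | empty => simpa using mul_self_pos.2 (hω y hy)
  | insert i S hi ih =>
    set z := S.piecewise y' y
    have hz : ∀ j, z j ∈ C j := fun j =>
      S.piecewise_cases y' y (· ∈ C j) (hy' j) (hy j)
    have hstep : 0 < ω z * ω (update z i (y' i)) := by
      have hne : ∀ x ∈ C i, ω.toLinearMap z i x ≠ 0 := fun x hx => hω _ fun j => by
        rcases eq_or_ne j i with rfl | hj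
        · simpa using hx
        · simpa [hj] using hz j
      simpa using mul_pos_of_forall_ne_zero_of_convex (hC i) hne (hz i) (hy' i)
    rw [Finset.piecewise_insert]
    refine pos_of_mul_pos_right (a := ω z ^ 2) ?_ (sq_nonneg _)
    calc 0 < (ω y * ω z) * (ω z * ω (update z i (y' i))) := mul_pos ih hstep
      _ = ω z ^ 2 * (ω y * ω (update z i (y' i))) := by ring

theorem det_ne_zero_iff_linearIndependent {ι : Type*} [Fintype ι] [DecidableEq ι]
    (b : Basis ι ℝ E) {v : ι → E} : b.det v ≠ 0 ↔ LinearIndependent ℝ v := by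
  have := b.finiteDimensional_of_finite
  rw [← isUnit_iff_ne_zero, ← b.is_basis_iff_det]
  exact ⟨And.left, fun hv =>
    ⟨hv, hv.span_eq_top_of_card_eq_finrank' (finrank_eq_card_basis b).symm⟩⟩

/-- The functional `x ↦ det (x, u 0, …, u (d - 1))`, whose sign is the side of the hyperplane
spanned by `u` on which `x` lies. -/
def detFunctional {d : ℕ} (b : Basis (Fin (d + 1)) ℝ E) (u : Fin d → E) : Dual ℝ E :=
  b.det.toMultilinearMap.toLinearMap (Fin.cons 0 u) 0

theorem detFunctional_apply {d : ℕ} (b : Basis (Fin (d + 1)) ℝ E) (u : Fin d → E) (x : E) :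
    detFunctional b u x = b.det (Fin.cons x u) := by
  simp [detFunctional]

theorem ker_detFunctional {d : ℕ} (b : Basis (Fin (d + 1)) ℝ E) {u : Fin d → E}
    (hu : LinearIndependent ℝ u) :
    LinearMap.ker (detFunctional b u) = Submodule.span ℝ (Set.range u) := by
  ext x
  rw [LinearMap.mem_ker, detFunctional_apply, ← not_iff_not, ← ne_eq,
    det_ne_zero_iff_linearIndependent, linearIndependent_finCons, and_iff_right hu]

theorem crosses_span_of_crosses_span_of_wellSeparated {ι : Type*} {d : ℕ}
    (b : Basis (Fin (d + 1)) ℝ E) {C : Fin d → Set E} {D : ι → Set E}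
    (hC : ∀ j, Convex ℝ (C j)) (hD : ∀ i, Convex ℝ (D i))
    (hsep : ∀ i, WellSeparated (Fin.cons (D i) C : Fin (d + 1) → Set E))
    {u u' : Fin d → E} (hu : ∀ j, u j ∈ C j) (hu' : ∀ j, u' j ∈ C j)
    {y y' : ι → E} (hy : ∀ i, y i ∈ D i) (hy' : ∀ i, y' i ∈ D i)
    (hcross : Crosses (Submodule.span ℝ (Set.range u)) (convexHull ℝ (Set.range y))) :
    Crosses (Submodule.span ℝ (Set.range u')) (convexHull ℝ (Set.range y')) := by
  have hcons : ∀ {v : Fin d → E} {z : ι → E}, (∀ j, v j ∈ C j) → (∀ i, z i ∈ D i) → ∀ i l,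
      (Fin.cons (z i) v : Fin (d + 1) → E) l ∈ (Fin.cons (D i) C : Fin (d + 1) → Set E) l :=
    fun hv hz i => Fin.cases (hz i) hv
  have hindep : ∀ {v : Fin d → E} {z : ι → E}, (∀ j, v j ∈ C j) → (∀ i, z i ∈ D i) → ι →
      LinearIndependent ℝ v := fun hv hz i =>
    (linearIndependent_finCons.1 (hsep i _ (hcons hv hz i))).1
  have hsign : ∀ i, 0 < detFunctional b u (y i) * detFunctional b u' (y' i) := fun i => by
    rw [detFunctional_apply, detFunctional_apply]
    exact mul_pos_of_multilinearMap_ne_zero b.det.toMultilinearMap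
      (C := Fin.cons (D i) C) (Fin.cases (hD i) hC)
      (fun z hz => (det_ne_zero_iff_linearIndependent b).2 (hsep i z hz))
      (hcons hu hy i) (hcons hu' hy' i)
  obtain ⟨i₀⟩ : Nonempty ι := Set.range_nonempty_iff_nonempty.1
    (convexHull_nonempty_iff.1 hcross.right)
  rw [← ker_detFunctional b (hindep hu' hy' i₀), crosses_ker_convexHull_iff]
  rw [← ker_detFunctional b (hindep hu hy i₀), crosses_ker_convexHull_iff] at hcross
  obtain ⟨⟨_, ⟨i, rfl⟩, hi⟩, _, ⟨j, rfl⟩, hj⟩ := hcross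
  exact ⟨⟨_, ⟨i, rfl⟩, (pos_of_mul_pos_right (hsign i) hi).le⟩,
    _, ⟨j, rfl⟩, (neg_of_mul_pos_right (hsign j) hj).le⟩

end Orientation

section Avoiding

variable {E : Type*} [AddCommGroup E] [Module ℝ E]

/-- Homogenised avoidance for families of vectors in a space of dimension `d + 1`: no linear
hyperplane spanned by `d` members of `a` meets the convex hull of `b`. -/
def LinearlyAvoids {ι κ : Type*} (d : ℕ) (a : ι → E) (b : κ → E) : Prop :=
  ∀ e : Fin d ↪ ι, ¬ Crosses (Submodule.span ℝ (Set.range (a ∘ e))) (convexHull ℝ (Set.range b))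

/-- Mutual avoidance of the two halves of a family indexed by a sum type. -/
def MutuallyLinearlyAvoiding {ι κ : Type*} (d : ℕ) (y : ι ⊕ κ → E) : Prop :=
  LinearlyAvoids d (y ∘ Sum.inl) (y ∘ Sum.inr) ∧ LinearlyAvoids d (y ∘ Sum.inr) (y ∘ Sum.inl)

open scoped Classical in
theorem card_filter_exists_crosses_span_le {ι κ : Type*} [Fintype ι] [Fintype κ] {d B : ℕ}
    {R : κ → Set E} (hE : d < finrank ℝ E)
    (hB : ∀ H : Submodule ℝ E, H ≠ ⊤ → #{i | Crosses H (R i)} ≤ B) (a : ι → E) :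
    #{i | ∃ e : Fin d → ι, Crosses (Submodule.span ℝ (Set.range (a ∘ e))) (R i)} ≤
      Fintype.card ι ^ d * B := by
  have hcover : ({i | ∃ e : Fin d → ι, Crosses (Submodule.span ℝ (Set.range (a ∘ e))) (R i)} :
      Finset κ) ⊆ Finset.univ.biUnion fun e : Fin d → ι =>
        {i | Crosses (Submodule.span ℝ (Set.range (a ∘ e))) (R i)} := fun i hi => by
    simpa using hi
  have hproper : ∀ e : Fin d → ι, Submodule.span ℝ (Set.range (a ∘ e)) ≠ ⊤ := fun e =>
    (Submodule.lt_top_of_finrank_lt_finrank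
      ((finrank_range_le_card (a ∘ e)).trans_lt (by simpa using hE))).ne
  calc _ ≤ _ := Finset.card_le_card hcover
    _ ≤ Fintype.card (Fin d → ι) * B :=
      Finset.card_biUnion_le_card_mul _ _ _ fun e _ => hB _ (hproper e)
    _ = Fintype.card ι ^ d * B := by simp

theorem LinearGeneralPosition.exists_mutuallyLinearlyAvoiding [FiniteDimensional ℝ E] {d : ℕ}
    (hE : finrank ℝ E = d + 1) {Q : Finset E} (hQ : LinearGeneralPosition Q) {t k : ℕ} (hk : 1 ≤ k)
    (hcard : ConvexCell.branchingConst (d + 1) ^ t * k ≤ #Q)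
    (ht : 4 * (k ^ d * d ^ t + 1) < (d + 1) ^ t) :
    ∃ y : Fin k ⊕ Fin k → E, Injective y ∧ (∀ s, y s ∈ Q) ∧ MutuallyLinearlyAvoiding d y := by
  classical
  obtain ⟨root, rfl⟩ := ConvexCell.exists_points_eq Q
  obtain ⟨leaf, hle, hdisj, hleaf, hcross⟩ := ConvexCell.exists_tree hE hk t hQ hcard
  have henum : ∀ i, ∃ y : Fin k → E, Injective y ∧ ∀ j, y j ∈ (leaf i).points := fun i => by
    obtain ⟨e⟩ := Embedding.nonempty_of_card_le (α := Fin k) (β := (leaf i).points)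
      (by simpa using hleaf i)
    exact ⟨fun j => e j, Subtype.val_injective.comp e.injective, fun j => (e j).2⟩
  choose y hyinj hy using henum
  obtain ⟨φ, hφ, hfree⟩ := exists_injective_forall_apply_notMem (α := Fin 2) (β := Fin 1)
    (F := fun τ => {i | ∃ e : Fin d → Fin k,
      Crosses (Submodule.span ℝ (Set.range (y (τ 0) ∘ e))) (leaf i).region})
    (fun τ => card_filter_exists_crosses_span_le (by omega) hcross (y (τ 0))) (by simpa using ht)
  have havoid : ∀ r s, r ≠ s → LinearlyAvoids d (y (φ r)) (y (φ s)) := fun r s hrs e he => by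
    refine hfree s (fun _ => r) (by simpa using hrs.symm)
      (Finset.mem_filter.2 ⟨Finset.mem_univ _, e, he.mono ?_⟩)
    exact convexHull_min (Set.range_subset_iff.2 fun j => (leaf _).points_subset (hy _ j))
      (leaf _).convex_region
  refine ⟨Sum.elim (y (φ 0)) (y (φ 1)), (hyinj _).sumElim (hyinj _) fun i j h => ?_,
    Sum.rec (fun j => ConvexCell.points_subset_of_le (hle _) (hy _ j))
      fun j => ConvexCell.points_subset_of_le (hle _) (hy _ j),
    havoid 0 1 (by decide), havoid 1 0 (by decide)⟩
  exact Finset.disjoint_left.1 (hdisj (hφ.ne (by decide : (0 : Fin 2) ≠ 1))) (hy _ i) (h ▸ hy _ j)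

end Avoiding

section Blocks

variable {E : Type*} [AddCommGroup E] [Module ℝ E] {d : ℕ}

theorem LinearlyAvoids.of_wellSeparated (b : Basis (Fin (d + 1)) ℝ E) {ι κ : Type*}
    {C : ι → Set E} {D : κ → Set E} (hC : ∀ i, Convex ℝ (C i)) (hD : ∀ i, Convex ℝ (D i))
    (hsep : ∀ (e : Fin d ↪ ι) (i : κ),
      WellSeparated (Fin.cons (D i) (C ∘ e) : Fin (d + 1) → Set E))
    {u u' : ι → E} (hu : ∀ i, u i ∈ C i) (hu' : ∀ i, u' i ∈ C i)
    {y y' : κ → E} (hy : ∀ i, y i ∈ D i) (hy' : ∀ i, y' i ∈ D i) (h : LinearlyAvoids d u y) :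
    LinearlyAvoids d u' y' := fun e hcross =>
  h e <| crosses_span_of_crosses_span_of_wellSeparated b (fun j => hC (e j)) hD (hsep e)
    (fun j => hu' (e j)) (fun j => hu (e j)) hy' hy hcross

theorem MutuallyLinearlyAvoiding.of_wellSeparated [FiniteDimensional ℝ E]
    (hE : finrank ℝ E = d + 1) {ι κ : Type*} {C : ι ⊕ κ → Set E} (hC : ∀ s, Convex ℝ (C s))
    (hsep : ∀ q : Fin (d + 1) → ι ⊕ κ, Injective q → WellSeparated fun i => C (q i))
    {y y' : ι ⊕ κ → E} (hy : ∀ s, y s ∈ C s) (hy' : ∀ s, y' s ∈ C s)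
    (h : MutuallyLinearlyAvoiding d y) : MutuallyLinearlyAvoiding d y' := by
  have hcons : ∀ (e : Fin d ↪ ι ⊕ κ) (s : ι ⊕ κ), s ∉ Set.range e →
      WellSeparated (Fin.cons (C s) (C ∘ e) : Fin (d + 1) → Set E) := fun e s hs => by
    rw [← Fin.comp_cons]
    exact hsep _ (Fin.cons_injective_iff.2 ⟨hs, e.injective⟩)
  let b := finBasisOfFinrankEq ℝ E hE
  constructor
  · exact h.1.of_wellSeparated b (fun i => hC (Sum.inl i)) (fun i => hC (Sum.inr i))
      (fun e i => hcons (e.trans Embedding.inl) (Sum.inr i) (by simp))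
      (fun i => hy _) (fun i => hy' _) (fun i => hy _) fun i => hy' _
  · exact h.2.of_wellSeparated b (fun i => hC (Sum.inr i)) (fun i => hC (Sum.inl i))
      (fun e i => hcons (e.trans Embedding.inr) (Sum.inl i) (by simp))
      (fun i => hy _) (fun i => hy' _) (fun i => hy _) fun i => hy' _

-- Mutual avoidance of one representative per cell passes to all choices of representatives.
theorem LinearGeneralPosition.exists_blocks_mutuallyLinearlyAvoiding [FiniteDimensional ℝ E]
    (hd : 1 ≤ d) (hE : finrank ℝ E = d + 1) {P : Finset E} (hP : LinearGeneralPosition P)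
    {t m M t' k : ℕ} (hk : 1 ≤ k) (hm : 1 ≤ m)
    (hcard : ConvexCell.branchingConst (d + 1) ^ t * m ≤ #P)
    (ht : M ^ (d + 1) * (2 ^ (d * (d + 2)) * d ^ t + d) < (d + 1) ^ t)
    (hM : ConvexCell.branchingConst (d + 1) ^ t' * k ≤ M)
    (ht' : 4 * (k ^ d * d ^ t' + 1) < (d + 1) ^ t') :
    ∃ C : Fin k ⊕ Fin k → Finset E, (∀ s, C s ⊆ P) ∧ Pairwise (Disjoint on C) ∧
      (∀ s, m ≤ #(C s)) ∧ ∀ y, (∀ s, y s ∈ C s) → MutuallyLinearlyAvoiding d y := by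
  classical
  obtain ⟨c, hcP, hdisj, hcm, hsep⟩ :=
    ConvexCell.exists_forall_injective_wellSeparated hd hE hP hm hcard ht
  choose rep hrep using fun i => Finset.card_pos.1 (Nat.lt_of_lt_of_le hm (hcm i))
  have hrep_inj : Injective rep := fun i j hij => by
    by_contra hne
    exact Finset.disjoint_left.1 (hdisj hne) (hrep i) (hij ▸ hrep j)
  have hrepP : Finset.univ.image rep ⊆ P :=
    Finset.image_subset_iff.2 fun i _ => hcP i (hrep i)
  obtain ⟨y, hy_inj, hy_mem, hy⟩ := (hP.mono hrepP).exists_mutuallyLinearlyAvoiding hE (t := t') hk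
    (by simpa [Finset.card_image_of_injective _ hrep_inj] using hM) ht'
  have hy_rep : ∀ s, ∃ i, rep i = y s := fun s => by simpa using hy_mem s
  choose x hx using hy_rep
  have hx_inj : Injective x := fun s s' h => hy_inj (by rw [← hx s, ← hx s', h])
  refine ⟨fun s => (c (x s)).points, fun s => hcP _, fun s s' h => hdisj (hx_inj.ne h),
    fun s => hcm _, fun z hz => ?_⟩
  exact hy.of_wellSeparated hE (fun s => (c (x s)).convex_region)
    (fun q hq => hsep (x ∘ q) (hx_inj.comp hq))
    (fun s => hx s ▸ (c (x s)).points_subset (hrep _)) fun s => (c (x s)).points_subset (hz s)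

end Blocks

section Parameters

theorem exists_forall_pow_mul_pow_lt_succ_pow {d : ℕ} (hd : 1 ≤ d) (C : ℕ) :
    ∃ a : ℕ, ∀ L ≠ 0, C ^ L * d ^ (a * L) < (d + 1) ^ (a * L) := by
  have hd' : (0 : ℝ) < d := by exact_mod_cast hd
  obtain ⟨a, ha⟩ := pow_unbounded_of_one_lt (C : ℝ) (y := ((d : ℝ) + 1) / d)
    (by rw [one_lt_div hd']; linarith)
  rw [div_pow, lt_div_iff₀ (by positivity)] at ha
  refine ⟨a, fun L hL => ?_⟩
  rw [pow_mul, pow_mul, ← mul_pow]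
  exact Nat.pow_lt_pow_left (by exact_mod_cast ha) hL

theorem exists_forall_four_mul_lt_succ_pow {d : ℕ} (hd : 1 ≤ d) :
    ∃ a : ℕ, ∀ k L : ℕ, 1 ≤ k → k ≤ 2 ^ L → L ≠ 0 →
      4 * (k ^ d * d ^ (a * L) + 1) < (d + 1) ^ (a * L) := by
  obtain ⟨a, ha⟩ := exists_forall_pow_mul_pow_lt_succ_pow hd (8 * 2 ^ d)
  refine ⟨a, fun k L hk hkL hL => ?_⟩
  have hpos : 0 < k ^ d * d ^ (a * L) := by positivity
  calc 4 * (k ^ d * d ^ (a * L) + 1) ≤ 8 * (k ^ d * d ^ (a * L)) := by omega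
    _ ≤ 8 ^ L * ((2 ^ L) ^ d * d ^ (a * L)) := by
      gcongr
      exact Nat.le_self_pow hL 8
    _ = (8 * 2 ^ d) ^ L * d ^ (a * L) := by rw [pow_right_comm, mul_pow, mul_assoc]
    _ < (d + 1) ^ (a * L) := ha L hL

theorem exists_forall_pow_mul_add_lt_succ_pow {d : ℕ} (hd : 1 ≤ d) (K X : ℕ) :
    ∃ a : ℕ, ∀ L ≠ 0, (K ^ L) ^ (d + 1) * (X * d ^ (a * L) + d) < (d + 1) ^ (a * L) := by
  obtain ⟨a, ha⟩ := exists_forall_pow_mul_pow_lt_succ_pow hd (K ^ (d + 1) * (X + d))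
  refine ⟨a, fun L hL => ?_⟩
  have hone : 1 ≤ d ^ (a * L) := Nat.one_le_pow _ _ hd
  calc (K ^ L) ^ (d + 1) * (X * d ^ (a * L) + d)
      ≤ (K ^ L) ^ (d + 1) * ((X + d) ^ L * d ^ (a * L)) := by
        gcongr
        calc X * d ^ (a * L) + d ≤ (X + d) * d ^ (a * L) := by nlinarith
          _ ≤ (X + d) ^ L * d ^ (a * L) := by
            gcongr
            exact Nat.le_self_pow hL _
    _ = (K ^ (d + 1) * (X + d)) ^ L * d ^ (a * L) := by rw [pow_right_comm, mul_pow, mul_assoc]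
    _ < (d + 1) ^ (a * L) := ha L hL

theorem pow_log_two_succ_le (e : ℕ) {k : ℕ} (hk : 2 ≤ k) :
    e ^ (Nat.log 2 k + 1) ≤ k ^ (2 * e) := calc
  e ^ (Nat.log 2 k + 1) ≤ (2 ^ e) ^ (Nat.log 2 k + 1) :=
    Nat.pow_le_pow_left Nat.lt_two_pow_self.le _
  _ = (2 ^ Nat.log 2 k * 2) ^ e := by rw [pow_right_comm, pow_succ]
  _ ≤ (k * k) ^ e := by
    gcongr
    exact Nat.pow_log_le_self 2 (by omega)
  _ = k ^ (2 * e) := by rw [pow_mul, sq]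

-- All parameters are powers with exponent `L = log₂ k + 1`, for which `k ≤ 2 ^ L ≤ k²`.
theorem exists_exponent_parameters {d K : ℕ} (hd : 1 ≤ d) (hK : 1 ≤ K) (X : ℕ) :
    ∃ c : ℕ, 0 < c ∧ ∀ k : ℕ, 2 ≤ k → ∃ t t' M : ℕ,
      M ^ (d + 1) * (X * d ^ t + d) < (d + 1) ^ t ∧ K ^ t' * k ≤ M ∧
      4 * (k ^ d * d ^ t' + 1) < (d + 1) ^ t' ∧ 2 * K ^ t ≤ k ^ c := by
  obtain ⟨a, ha⟩ := exists_forall_four_mul_lt_succ_pow hd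
  obtain ⟨b, hb⟩ := exists_forall_pow_mul_add_lt_succ_pow hd (K ^ a * 2) X
  refine ⟨2 * (2 * K ^ b), by positivity, fun k hk => ?_⟩
  have hkL : k ≤ 2 ^ (Nat.log 2 k + 1) := (Nat.lt_pow_succ_log_self one_lt_two k).le
  refine ⟨b * (Nat.log 2 k + 1), a * (Nat.log 2 k + 1), (K ^ a * 2) ^ (Nat.log 2 k + 1),
    hb _ (Nat.succ_ne_zero _), ?_, ha k _ (by omega) hkL (Nat.succ_ne_zero _), ?_⟩
  · rw [mul_pow, ← pow_mul]
    exact Nat.mul_le_mul_left _ hkL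
  · calc 2 * K ^ (b * (Nat.log 2 k + 1))
        ≤ 2 ^ (Nat.log 2 k + 1) * (K ^ b) ^ (Nat.log 2 k + 1) := by
          rw [pow_mul]
          exact Nat.mul_le_mul_right _ (Nat.le_self_pow (Nat.succ_ne_zero _) 2)
      _ = (2 * K ^ b) ^ (Nat.log 2 k + 1) := (mul_pow ..).symm
      _ ≤ _ := pow_log_two_succ_le _ hk

theorem LinearGeneralPosition.exists_fraction_blocks {E : Type*} [AddCommGroup E] [Module ℝ E]
    [FiniteDimensional ℝ E] {d : ℕ} (hd : 1 ≤ d) (hE : finrank ℝ E = d + 1) :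
    ∃ c : ℕ, 0 < c ∧ ∀ k : ℕ, 2 ≤ k → ∃ n₀ : ℕ, ∀ P : Finset E, LinearGeneralPosition P →
      n₀ ≤ #P → ∃ C : Fin k ⊕ Fin k → Finset E, (∀ s, C s ⊆ P) ∧ Pairwise (Disjoint on C) ∧
        (∀ s, #P ≤ #(C s) * k ^ c) ∧ ∀ y, (∀ s, y s ∈ C s) → MutuallyLinearlyAvoiding d y := by
  obtain ⟨c, hc, hparam⟩ := exists_exponent_parameters hd
    (ConvexCell.branchingConst_pos d.succ_pos) (2 ^ (d * (d + 2)))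
  refine ⟨c, hc, fun k hk => ?_⟩
  obtain ⟨t, t', M, ht, hM, ht', hkc⟩ := hparam k hk
  set N := ConvexCell.branchingConst (d + 1) ^ t
  have hN : 0 < N := pow_pos (ConvexCell.branchingConst_pos d.succ_pos) t
  refine ⟨N, fun P hP hcard => ?_⟩
  have hm : 1 ≤ #P / N := (Nat.one_le_div_iff hN).2 hcard
  obtain ⟨C, hCP, hdisj, hCm, havoid⟩ := hP.exists_blocks_mutuallyLinearlyAvoiding hd hE
    (by omega) hm (Nat.mul_div_le _ _) ht hM ht'
  refine ⟨C, hCP, hdisj, fun s => ?_, havoid⟩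
  calc #P ≤ N * (#P / N + 1) := (Nat.lt_mul_div_succ _ hN).le
    _ ≤ #P / N * (2 * N) := by nlinarith
    _ ≤ #(C s) * k ^ c := Nat.mul_le_mul (hCm s) hkc

end Parameters

section Homogenization

variable {V : Type*} [AddCommGroup V] [Module ℝ V]

/-- The embedding `x ↦ (x, 1)` of an affine space in a vector space of one dimension more, under
which affine hyperplanes become traces of linear hyperplanes. -/
def homogenize : V →ᵃ[ℝ] V × ℝ :=
  (AffineMap.id ℝ V).prod (AffineMap.const ℝ V 1)

theorem homogenizhe_inj : Injective (homogenize : V → V × ℝ) :=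
  fun _ _ h => congrArg Prod.fst h

theorem homogenize_mem_span {s : Set V} {x : V} (hx : x ∈ affineSpan ℝ s) :
    homogenize x ∈ Submodule.span ℝ (homogenize '' s) := by
  refine affineSpan_subset_span ?_
  rw [← AffineSubspace.map_span]
  exact AffineSubspace.mem_map_of_mem homogenize hx

theorem homogenize_mem_convexHull {s : Set V} {x : V} (hx : x ∈ convexHull ℝ s) :
    homogenize x ∈ convexHull ℝ (homogenize '' s) := by
  rw [← AffineMap.image_convexHull]
  exact Set.mem_image_of_mem homogenize hx

theorem linearIndependent_homogenize {ι : Type*} {p : ι → V} (hp : AffineIndependent ℝ p) :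
    LinearIndependent ℝ (homogenize ∘ p) := by
  rw [linearIndependent_iff']
  intro s w hw
  have hvector : ∑ i ∈ s, w i • p i = 0 := by
    simpa [homogenize, Prod.fst_sum] using congrArg Prod.fst hw
  have hweight : ∑ i ∈ s, w i = 0 := by
    simpa [homogenize, Prod.snd_sum] using congrArg Prod.snd hw
  exact affineIndependent_iff.1 hp s w hweight hvector

end Homogenization

section Euclidean

variable {d : ℕ}

theorem GenPosD.linearGeneralPosition_map {P : Finset (EuclideanSpace ℝ (Fin d))}
    (hP : GenPosD d (P : Set (EuclideanSpace ℝ (Fin d)))) :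
    LinearGeneralPosition (P.map ⟨homogenize, homogenizhe_inj⟩) := by
  intro Z hZ hcard
  obtain ⟨s, hs, rfl⟩ := Finset.subset_map_iff.1 hZ
  have hscard : #s = d + 1 := by simpa using hcard
  have hindep := linearIndependent_homogenize (hP s (Finset.coe_subset.2 hs) hscard)
  simpa [Set.range_comp] using hindep.linearIndepOn_id

theorem LinearlyAvoids.avoidsD {ι κ : Type*} {a : ι → EuclideanSpace ℝ (Fin d)}
    {b : κ → EuclideanSpace ℝ (Fin d)} (h : LinearlyAvoids d (homogenize ∘ a) (homogenize ∘ b)) :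
    AvoidsD d (Set.range a) (Set.range b) := by
  intro s hs hcard
  have hmem : ∀ j, ∃ i, a i = (s.equivFinOfCardEq hcard).symm j :=
    fun j => hs (Subtype.coe_prop _)
  choose e he using hmem
  have he_inj : Injective e := fun i j hij =>
    (s.equivFinOfCardEq hcard).symm.injective (Subtype.ext (by rw [← he, ← he, hij]))
  have hsub : (s : Set (EuclideanSpace ℝ (Fin d))) ⊆ Set.range (a ∘ e) := fun x hx =>
    ⟨s.equivFinOfCardEq hcard ⟨x, hx⟩, by simp [he]⟩
  refine Set.disjoint_left.2 fun x hx hx' => h ⟨e, he_inj⟩ ⟨homogenize x, ?_, ?_⟩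
  · have := homogenize_mem_span (affineSpan_mono ℝ hsub hx)
    rwa [← Set.range_comp] at this
  · rw [Set.range_comp]
    exact homogenize_mem_convexHull hx'

theorem MutuallyLinearlyAvoiding.mutuallyAvoidingD {ι κ : Type*}
    {a : ι → EuclideanSpace ℝ (Fin d)} {b : κ → EuclideanSpace ℝ (Fin d)}
    (h : MutuallyLinearlyAvoiding d (homogenize ∘ Sum.elim a b)) :
    MutuallyAvoidingD d (Set.range a) (Set.range b) :=
  ⟨LinearlyAvoids.avoidsD h.1, LinearlyAvoids.avoidsD h.2⟩

theorem GenPosD.exists_fraction_blocks (hd : 1 ≤ d) :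
    ∃ c : ℕ, 0 < c ∧ ∀ k, 2 ≤ k → ∃ n₀, ∀ P : Finset (EuclideanSpace ℝ (Fin d)),
      GenPosD d (P : Set (EuclideanSpace ℝ (Fin d))) → n₀ ≤ #P →
      ∃ C : Fin k ⊕ Fin k → Finset (EuclideanSpace ℝ (Fin d)),
        (∀ s, C s ⊆ P) ∧ Pairwise (Disjoint on C) ∧ (∀ s, #P ≤ #(C s) * k ^ c) ∧
        ∀ y, (∀ s, y s ∈ C s) → MutuallyLinearlyAvoiding d (homogenize ∘ y) := by
  obtain ⟨c, hc, hblocks⟩ := LinearGeneralPosition.exists_fraction_blocks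
    (E := EuclideanSpace ℝ (Fin d) × ℝ) hd (by simp)
  refine ⟨c, hc, fun k hk => ?_⟩
  obtain ⟨n₀, hn₀⟩ := hblocks k hk
  refine ⟨n₀, fun P hP hn => ?_⟩
  obtain ⟨C, hCP, hdisj, hcard, havoid⟩ :=
    hn₀ _ hP.linearGeneralPosition_map (by rwa [Finset.card_map])
  choose D hDP hCD using fun s => Finset.subset_map_iff.1 (hCP s)
  obtain rfl : C = _ := funext hCD
  refine ⟨D, hDP, fun s t hst => (Finset.disjoint_map _).1 (hdisj hst), by simpa using hcard,
    fun y hy => havoid _ fun s => Finset.mem_map_of_mem _ (hy s)⟩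

end Euclidean

theorem fractional_mutually_avoiding_higher_dim_general (d : ℕ) (hd : 1 ≤ d) :
    ∃ c : ℝ, 0 < c ∧
      ∀ k : ℕ, 2 ≤ k → ∃ n₀ : ℕ,
        ∀ (P : Finset (EuclideanSpace ℝ (Fin d))) (n : ℕ), P.card = n → n₀ ≤ n →
          GenPosD d (P : Set (EuclideanSpace ℝ (Fin d))) →
          ∃ A B : Fin k → Finset (EuclideanSpace ℝ (Fin d)),
            (∀ i, A i ⊆ P) ∧ (∀ i, B i ⊆ P) ∧
            (∀ i j, i ≠ j → Disjoint (A i) (A j)) ∧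
            (∀ i j, i ≠ j → Disjoint (B i) (B j)) ∧
            (∀ i j, Disjoint (A i) (B j)) ∧
            (∀ i, (n : ℝ) / (k : ℝ) ^ c ≤ (A i).card) ∧
            (∀ i, (n : ℝ) / (k : ℝ) ^ c ≤ (B i).card) ∧
            (∀ a b : Fin k → EuclideanSpace ℝ (Fin d),
              (∀ i, a i ∈ A i) → (∀ i, b i ∈ B i) →
              MutuallyAvoidingD d (Set.range a) (Set.range b)) := by
  obtain ⟨c, hc, hblocks⟩ := GenPosD.exists_fraction_blocks hd
  refine ⟨c, Nat.cast_pos.2 hc, fun k hk => ?_⟩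
  obtain ⟨n₀, hn₀⟩ := hblocks k hk
  refine ⟨n₀, fun P n hPn hn hP => ?_⟩
  subst hPn
  obtain ⟨C, hCP, hdisj, hcard, havoid⟩ := hn₀ P hP hn
  have hfraction : ∀ s, (#P : ℝ) / (k : ℝ) ^ (c : ℝ) ≤ #(C s) := fun s => by
    rw [Real.rpow_natCast, div_le_iff₀ (by positivity)]
    exact_mod_cast hcard s
  exact ⟨C ∘ Sum.inl, C ∘ Sum.inr, fun i => hCP _, fun i => hCP _,
    fun i j hij => hdisj (Sum.inl_injective.ne hij),
    fun i j hij => hdisj (Sum.inr_injective.ne hij),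
    fun i j => hdisj Sum.inl_ne_inr, fun i => hfraction _, fun i => hfraction _,
    fun a b ha hb => (havoid (Sum.elim a b) (Sum.forall.2 ⟨ha, hb⟩)).mutuallyAvoidingD⟩

/-- Positive fraction mutually avoiding sets theorem in `ℝ^d`. -/
theorem fractional_mutually_avoiding_higher_dim (d : ℕ) (hd : 3 ≤ d) :
    ∃ c : ℝ, 0 < c ∧
      ∀ k : ℕ, 2 ≤ k → ∃ n₀ : ℕ,
        ∀ (P : Finset (EuclideanSpace ℝ (Fin d))) (n : ℕ), P.card = n → n₀ ≤ n →
          GenPosD d (P : Set (EuclideanSpace ℝ (Fin d))) →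
          ∃ A B : Fin k → Finset (EuclideanSpace ℝ (Fin d)),
            (∀ i, A i ⊆ P) ∧ (∀ i, B i ⊆ P) ∧
            (∀ i j, i ≠ j → Disjoint (A i) (A j)) ∧
            (∀ i j, i ≠ j → Disjoint (B i) (B j)) ∧
            (∀ i j, Disjoint (A i) (B j)) ∧
            (∀ i, (n : ℝ) / (k : ℝ) ^ c ≤ (A i).card) ∧
            (∀ i, (n : ℝ) / (k : ℝ) ^ c ≤ (B i).card) ∧
            (∀ a b : Fin k → EuclideanSpace ℝ (Fin d),
              (∀ i, a i ∈ A i) → (∀ i, b i ∈ B i) →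
              MutuallyAvoidingD d (Set.range a) (Set.range b)) :=
  fractional_mutually_avoiding_higher_dim_general d (by omega)
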